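/- arXiv:1905.02160 — 2 statements merged into one kernel-verified Lean document; each statement's English description precedes it below -/
import Mathlib

section
/- (Relativized main theorem.) For every k, r ∈ ℕ with k, r ≥ 1, every infinite block sequence P in FIN_{±k}, and every Souslin measurable colouring c : FIN_{±k}^[∞] → {0, …, r−1} (with respect to the metrizable topology), there exist i < r and an infinite block sequence Q ≤ P such that ⟨Q⟩_{±k}^[∞] ⊆ (c⁻¹{i})₁. -/
open Function Set

/-- `p` is an element of `FIN_{±k}`: finitely supported, values in `{0, ±1, …, ±k}`,
attaining one of the values `±k`. -/
def IsFin (k : ℕ) (p : ℕ → ℤ) : Prop :=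
  (Function.support p).Finite ∧ (∀ n, |p n| ≤ (k : ℤ)) ∧ (∃ n, |p n| = (k : ℤ))

/-- `p < q` in the block ordering: every point of `supp p` precedes every point of `supp q`. -/
def BlockLt (p q : ℕ → ℤ) : Prop :=
  ∀ m n : ℕ, p m ≠ 0 → q n ≠ 0 → m < n

/-- The tetris operation `T`. -/
def tetris (p : ℕ → ℤ) : ℕ → ℤ := fun n =>
  if 0 < p n then p n - 1 else if p n < 0 then p n + 1 else 0

/-- The sign-flipped tetris operation `-T`. -/
def negT (p : ℕ → ℤ) : ℕ → ℤ := -(tetris p)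

/-- The weak tetris operation `S`. -/
def Sop (p : ℕ → ℤ) : ℕ → ℤ := fun n => if |p n| = 1 then 0 else p n

/-- `‖p‖ ≤ c` for the `ℓ∞` norm. -/
def normLe (p : ℕ → ℤ) (c : ℕ) : Prop := ∀ n, |p n| ≤ (c : ℤ)

/-- `(A)_c`, the `c`-fattening of `A`. -/
def approx (c : ℕ) (A : Set (ℕ → ℤ)) : Set (ℕ → ℤ) :=
  {p | ∃ q ∈ A, normLe (p - q) c}

/-- `P` is an infinite block sequence in `FIN_{±k}`. -/
def IsBlockSeq (k : ℕ) (P : ℕ → ℕ → ℤ) : Prop :=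
  (∀ n, IsFin k (P n)) ∧ ∀ m n : ℕ, m < n → BlockLt (P m) (P n)

/-- `t` is a finite block sequence in `FIN_{±k}` (coded as a list). -/
def IsFinBlockSeq (k : ℕ) (t : List (ℕ → ℤ)) : Prop :=
  (∀ p ∈ t, IsFin k p) ∧ t.Pairwise BlockLt

/-- `q ∈ ⟨P⟩_{±k}`: `q = ε₀T^{j₀}(p_{n₀}) + ⋯ + ε_m T^{j_m}(p_{n_m})` with `n₀ < ⋯ < n_m`,
`εᵢ ∈ {±1}`, `jᵢ < k` and `min jᵢ = 0`. -/
def InSpanPM (k : ℕ) (P : ℕ → ℕ → ℤ) (q : ℕ → ℤ) : Prop :=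
  ∃ (m : ℕ) (n : Fin (m + 1) → ℕ) (ε : Fin (m + 1) → ℤ) (j : Fin (m + 1) → ℕ),
    StrictMono n ∧ (∀ i, ε i = 1 ∨ ε i = -1) ∧ (∀ i, j i < k) ∧ (∃ i, j i = 0) ∧
    q = ∑ i, ε i • tetris^[j i] (P (n i))

/-- `q ∈ ⟨P⟩_{(−T)}`. -/
def InSpanNegT (k : ℕ) (P : ℕ → ℕ → ℤ) (q : ℕ → ℤ) : Prop :=
  ∃ (m : ℕ) (n : Fin (m + 1) → ℕ) (j : Fin (m + 1) → ℕ),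
    StrictMono n ∧ (∀ i, j i < k) ∧ (∃ i, j i = 0) ∧
    q = ∑ i, negT^[j i] (P (n i))

/-- `q ∈ ⟨p_a, …, p_b⟩_{(−T)}`. -/
def InSpanNegTRange (k : ℕ) (P : ℕ → ℕ → ℤ) (a b : ℕ) (q : ℕ → ℤ) : Prop :=
  ∃ (m : ℕ) (n : Fin (m + 1) → ℕ) (j : Fin (m + 1) → ℕ),
    StrictMono n ∧ (∀ i, a ≤ n i ∧ n i ≤ b) ∧ (∀ i, j i < k) ∧ (∃ i, j i = 0) ∧
    q = ∑ i, negT^[j i] (P (n i))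

/-- A cofinite ultrafilter on `FIN_{±k}` (coded as an ultrafilter on `ℕ → ℤ`
concentrating on `FIN_{±k}`). -/
def IsCofiniteUF (k : ℕ) (𝒰 : Ultrafilter (ℕ → ℤ)) : Prop :=
  {p | IsFin k p} ∈ 𝒰 ∧ ∀ m : ℕ, {p : ℕ → ℤ | ∀ n < m, p n = 0} ∈ 𝒰

/-- `A ∈ 𝒰 + 𝒱`. -/
def SumMem (𝒰 𝒱 : Ultrafilter (ℕ → ℤ)) (A : Set (ℕ → ℤ)) : Prop :=
  {p | {q | BlockLt p q ∧ p + q ∈ A} ∈ 𝒱} ∈ 𝒰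

/-- `𝒰` is subsymmetric: `A ∈ 𝒰` implies `−(A)₁ ∈ 𝒰`. -/
def IsSubsymmetric (𝒰 : Ultrafilter (ℕ → ℤ)) : Prop :=
  ∀ A ∈ 𝒰, {p : ℕ → ℤ | -p ∈ approx 1 A} ∈ 𝒰

/-- `𝒰 + (−T)^j 𝒰 = (−T)^j 𝒰 + 𝒰 = 𝒰` for all `j ≤ k`. -/
def IsIdempotentUF (k : ℕ) (𝒰 : Ultrafilter (ℕ → ℤ)) : Prop :=
  ∀ j ≤ k, ∀ A : Set (ℕ → ℤ),
    (SumMem 𝒰 (Ultrafilter.map (negT^[j]) 𝒰) A ↔ A ∈ 𝒰) ∧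
    (SumMem (Ultrafilter.map (negT^[j]) 𝒰) 𝒰 A ↔ A ∈ 𝒰)

/-- A cofinite subsymmetric ultrafilter on `FIN_{±k}` idempotent with respect to
all the maps `(−T)^j`, `j ≤ k`. -/
def IsGowersUF (k : ℕ) (𝒰 : Ultrafilter (ℕ → ℤ)) : Prop :=
  IsCofiniteUF k 𝒰 ∧ IsSubsymmetric 𝒰 ∧ IsIdempotentUF k 𝒰

/-- A `𝒰`-tree on `FIN_{±k}` with stem `s`. -/
structure IsUTree (k : ℕ) (𝒰 : Ultrafilter (ℕ → ℤ)) (U : Set (List (ℕ → ℤ)))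
    (s : List (ℕ → ℤ)) : Prop where
  blocks : ∀ t ∈ U, IsFinBlockSeq k t
  prefixClosed : ∀ t ∈ U, ∀ t' : List (ℕ → ℤ), t' <+: t → t' ∈ U
  stemMem : s ∈ U
  stemComparable : ∀ t ∈ U, s <+: t ∨ t <+: s
  branch : ∀ t ∈ U, s <+: t → {p | t ++ [p] ∈ U} ∈ 𝒰

/-- `[U]`, the set of infinite branches of a tree of finite block sequences. -/
def Branches (U : Set (List (ℕ → ℤ))) : Set (ℕ → ℕ → ℤ) :=
  {P | ∀ n : ℕ, (List.ofFn fun i : Fin n => P i.1) ∈ U}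

/-- The space `FIN_{±k}^[∞]` of infinite block sequences. -/
def BlockSeq (k : ℕ) : Type := {P : ℕ → ℕ → ℤ // IsBlockSeq k P}

/-- The metrizable topology on `FIN_{±k}^[∞]`, generated by the basic sets `[s]`. -/
instance BlockSeq.topology (k : ℕ) : TopologicalSpace (BlockSeq k) :=
  TopologicalSpace.generateFrom
    {O | ∃ s : List (ℕ → ℤ),
      O = {P : BlockSeq k | ∀ i : Fin s.length, P.1 i.1 = s.get i}}

/-- The Souslin operation applied to a Souslin scheme. -/
def SouslinOp {α : Type*} (F : List ℕ → Set α) : Set α :=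
  ⋃ x : ℕ → ℕ, ⋂ n : ℕ, F (List.ofFn fun i : Fin n => x i.1)

/-- `A` is Souslin measurable: it belongs to every field of sets containing the open
sets and closed under the Souslin operation. -/
def SouslinMeasurable {α : Type*} [TopologicalSpace α] (A : Set α) : Prop :=
  ∀ 𝓕 : Set (Set α),
    (∀ O : Set α, IsOpen O → O ∈ 𝓕) →
    (∀ B ∈ 𝓕, Bᶜ ∈ 𝓕) →
    (∀ B ∈ 𝓕, ∀ C ∈ 𝓕, B ∪ C ∈ 𝓕) →
    (∀ F : List ℕ → Set α, (∀ s, F s ∈ 𝓕) → SouslinOp F ∈ 𝓕) →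
    A ∈ 𝓕

/-- The map `Φ_m : FIN_{±2m} → FIN_{±m}` (its defining formula does not depend on `m`). -/
def Phi (p : ℕ → ℤ) : ℕ → ℤ := fun n =>
  if p n % 2 = 0 then p n / 2
  else if 0 < p n then (p n - 1) / 2
  else (p n + 1) / 2

/-- `Ψ = Φ_k ∘ Φ_{2k} : FIN_{±4k} → FIN_{±k}`. -/
def Psi (p : ℕ → ℤ) : ℕ → ℤ := Phi (Phi p)

section Ramsey

variable {α : Type*}

/-- The list of the first `n` terms of `x`. -/
def pre (x : ℕ → α) (n : ℕ) : List α := (List.range n).map x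

lemma pre_length (x : ℕ → α) (n : ℕ) : (pre x n).length = n := by simp [pre]

lemma pre_succ (x : ℕ → α) (n : ℕ) : pre x (n + 1) = pre x n ++ [x n] := by
  simp [pre, List.range_succ]

lemma pre_zero (x : ℕ → α) : pre x 0 = [] := by simp [pre]

lemma pre_eq_iff (x y : ℕ → α) (n : ℕ) : pre x n = pre y n ↔ ∀ i < n, x i = y i := by
  simp [pre]

lemma pre_take (x : ℕ → α) {m n : ℕ} (h : m ≤ n) : (pre x n).take m = pre x m := by
  simp [pre, ← List.map_take, List.take_range, h]

lemma ofFn_eq_pre (x : ℕ → α) (n : ℕ) : (List.ofFn fun i : Fin n => x i.1) = pre x n := by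
  apply List.ext_getElem <;> simp [pre]

lemma exists_branch (A : List α → Set α) (h : ∀ t, (A t).Nonempty) :
    ∃ x : ℕ → α, ∀ n, x n ∈ A (pre x n) := by
  choose f hf using h
  let L : ℕ → List α := fun n => Nat.rec [] (fun _ l => l ++ [f l]) n
  have key : ∀ n, pre (fun n => f (L n)) n = L n := by
    intro n
    induction n with
    | zero => simp [pre, L]
    | succ n ih => rw [pre_succ, ih]
  exact ⟨fun n => f (L n), fun n => by rw [key]; exact hf _⟩

/-- Sequences extending `s` and afterwards following the tree given by `A`. -/
def Box (s : List α) (A : List α → Set α) : Set (ℕ → α) :=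
  {x | pre x s.length = s ∧ ∀ n, s.length ≤ n → x n ∈ A (pre x n)}

/-- All the sets `A t` are large. -/
def Lg (U : Ultrafilter α) (A : List α → Set α) : Prop := ∀ t, A t ∈ U

lemma box_mono {s : List α} {A B : List α → Set α} (h : ∀ t, A t ⊆ B t) :
    Box s A ⊆ Box s B := fun _ hx => ⟨hx.1, fun n hn => h _ (hx.2 n hn)⟩

lemma mem_box_pre {s : List α} {A : List α → Set α} {x : ℕ → α} (hx : x ∈ Box s A) {n : ℕ}
    (hn : s.length ≤ n) : x ∈ Box (pre x n) A :=
  ⟨by rw [pre_length], fun m hm => hx.2 m (by rw [pre_length] at hm; omega)⟩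

lemma box_pre_sub {A : List α → Set α} {x : ℕ → α} {m n : ℕ} (h : m ≤ n)
    (hx : x ∈ Box (pre x m) A) :
    Box (pre x n) A ⊆ Box (pre x m) A := by
  intro y hy
  have h1 := hy.1
  rw [pre_length, pre_eq_iff] at h1
  refine ⟨?_, ?_⟩
  · rw [pre_length, pre_eq_iff]
    intro i hi; exact h1 i (by omega)
  · intro j hj
    rw [pre_length] at hj
    by_cases hjn : n ≤ j
    · exact hy.2 j (by rwa [pre_length])
    · have e : pre y j = pre x j := by
        rw [pre_eq_iff]; intro i hi; exact h1 i (by omega)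
      rw [e, h1 j (by omega)]
      exact hx.2 j (by rwa [pre_length])

variable (U : Ultrafilter α)

/-- Openness in the topology generated by the boxes. -/
def UOpen (O : Set (ℕ → α)) : Prop :=
  ∀ x ∈ O, ∃ (n : ℕ) (A : List α → Set α), Lg U A ∧ x ∈ Box (pre x n) A ∧ Box (pre x n) A ⊆ O

/-- Every stem has a tree deciding `X`. -/
def URamsey (X : Set (ℕ → α)) : Prop :=
  ∀ s, ∃ A, Lg U A ∧ (Box s A ⊆ X ∨ Box s A ⊆ Xᶜ)

/-- Every stem has a tree avoiding `X`. -/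
def UNull (X : Set (ℕ → α)) : Prop :=
  ∀ s, ∃ A, Lg U A ∧ Box s A ⊆ Xᶜ

variable {U}

lemma Lg.inter {A B : List α → Set α} (hA : Lg U A) (hB : Lg U B) :
    Lg U (fun t => A t ∩ B t) := fun t => Filter.inter_mem (hA t) (hB t)

lemma UOpen.uramsey {O : Set (ℕ → α)} (hO : UOpen U O) : URamsey U O := by
  intro s
  let Good : List α → Prop := fun t => ∃ A, Lg U A ∧ Box t A ⊆ O
  have h0 : ∀ t, ∃ A, Lg U A ∧ (Good t → Box t A ⊆ O) := by
    intro t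
    by_cases h : Good t
    · obtain ⟨A, hA, hB⟩ := h
      exact ⟨A, hA, fun _ => hB⟩
    · exact ⟨fun _ => univ, fun _ => Filter.univ_mem, fun h' => absurd h' h⟩
  choose C hC hCO using h0
  have step : ∀ t, {p | Good (t ++ [p])} ∈ U → Good t := by
    intro t ht
    refine ⟨fun u => if u.length ≤ t.length then {p | Good (t ++ [p])}
      else C (u.take (t.length + 1)) u, ?_, ?_⟩
    · intro u
      dsimp only
      split_ifs
      · exact ht
      · exact hC _ _
    · intro x hx
      have e : pre x (t.length + 1) = t ++ [x t.length] := by rw [pre_succ, hx.1]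
      have h1 := hx.2 t.length le_rfl
      dsimp only at h1
      rw [pre_length, if_pos le_rfl] at h1
      apply hCO _ h1
      refine ⟨?_, ?_⟩
      · simp only [List.length_append, List.length_singleton]; exact e
      · intro n hn
        simp only [List.length_append, List.length_singleton] at hn
        have h2 := hx.2 n (by omega)
        dsimp only at h2
        rw [pre_length, if_neg (by omega), pre_take x hn, e] at h2
        exact h2
  by_cases hs : Good s
  · obtain ⟨A, hA, hB⟩ := hs
    exact ⟨A, hA, Or.inl hB⟩
  refine ⟨fun t => {p | ¬ Good t → ¬ Good (t ++ [p])}, ?_, Or.inr ?_⟩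
  · intro t
    by_cases h : Good t
    · filter_upwards with p using fun h' => absurd h h'
    · have h1 : {p | Good (t ++ [p])} ∉ U := fun h' => h (step t h')
      have := Ultrafilter.compl_mem_iff_notMem.2 h1
      filter_upwards [this] with p hp using fun _ => hp
  · intro x hx hxO
    have ng : ∀ n, s.length ≤ n → ¬ Good (pre x n) := by
      intro n hn
      induction n, hn using Nat.le_induction with
      | base => rw [hx.1]; exact hs
      | succ n hn ih => rw [pre_succ]; exact hx.2 n hn ih
    obtain ⟨n, A, hA, hxA, hAO⟩ := hO x hxO
    exact ng (max n s.length) (le_max_right _ _)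
      ⟨A, hA, (box_pre_sub (le_max_left _ _) hxA).trans hAO⟩

lemma URamsey.compl {X : Set (ℕ → α)} (h : URamsey U X) : URamsey U Xᶜ := by
  intro s
  obtain ⟨A, hA, h1⟩ := h s
  exact ⟨A, hA, by rw [compl_compl]; exact h1.symm⟩

lemma URamsey.union {X Y : Set (ℕ → α)} (h : URamsey U X) (h' : URamsey U Y) :
    URamsey U (X ∪ Y) := by
  intro s
  obtain ⟨A, hA, h1⟩ := h s
  obtain ⟨B, hB, h2⟩ := h' s
  refine ⟨_, hA.inter hB, ?_⟩
  have e1 : Box s (fun t => A t ∩ B t) ⊆ Box s A := box_mono fun t => inter_subset_left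
  have e2 : Box s (fun t => A t ∩ B t) ⊆ Box s B := box_mono fun t => inter_subset_right
  rcases h1 with h1 | h1
  · exact Or.inl fun x hx => Or.inl (h1 (e1 hx))
  rcases h2 with h2 | h2
  · exact Or.inl fun x hx => Or.inr (h2 (e2 hx))
  · refine Or.inr fun x hx hx' => ?_
    rcases hx' with hx' | hx'
    · exact h1 (e1 hx) hx'
    · exact h2 (e2 hx) hx'

lemma URamsey.inter {X Y : Set (ℕ → α)} (h : URamsey U X) (h' : URamsey U Y) :
    URamsey U (X ∩ Y) := by
  have := (h.compl.union h'.compl).compl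
  rwa [← compl_inter, compl_compl] at this

lemma UNull.mono {X Y : Set (ℕ → α)} (h : UNull U Y) (hXY : X ⊆ Y) : UNull U X := by
  intro s
  obtain ⟨A, hA, h1⟩ := h s
  exact ⟨A, hA, h1.trans (compl_subset_compl.2 hXY)⟩

lemma UNull.union {X Y : Set (ℕ → α)} (h : UNull U X) (h' : UNull U Y) : UNull U (X ∪ Y) := by
  intro s
  obtain ⟨A, hA, h1⟩ := h s
  obtain ⟨B, hB, h2⟩ := h' s
  refine ⟨_, hA.inter hB, fun x hx hx' => ?_⟩
  rcases hx' with hx' | hx'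
  · exact h1 (box_mono (fun t => inter_subset_left) hx) hx'
  · exact h2 (box_mono (fun t => inter_subset_right) hx) hx'

lemma UNull.iUnion_nat {N : ℕ → Set (ℕ → α)} (h : ∀ i, UNull U (N i)) : UNull U (⋃ i, N i) := by
  intro s
  choose C hC hCN using h
  refine ⟨fun u => ⋂ m ∈ Finset.range (u.length + 1), ⋂ i ∈ Finset.range (m + 1),
    C i (u.take m) u, ?_, ?_⟩
  · intro u
    rw [← Ultrafilter.mem_coe, Filter.biInter_finset_mem]
    intro m _
    rw [Filter.biInter_finset_mem]
    intro i _
    exact hC _ _ _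
  · intro x hx hx'
    obtain ⟨i, hi⟩ := mem_iUnion.1 hx'
    refine hCN i (pre x (max s.length i)) ?_ hi
    refine ⟨by rw [pre_length], fun n hn => ?_⟩
    rw [pre_length] at hn
    have h1 := hx.2 n (by omega)
    simp only [mem_iInter, Finset.mem_range, pre_length] at h1
    have h2 := h1 (max s.length i) (by omega) i (by omega)
    rwa [pre_take x hn] at h2

lemma UNull.iUnion {ι : Type*} [Countable ι] [Nonempty ι] {N : ι → Set (ℕ → α)}
    (h : ∀ i, UNull U (N i)) : UNull U (⋃ i, N i) := by
  obtain ⟨f, hf⟩ := exists_surjective_nat ι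
  rw [← hf.iUnion_comp]
  exact UNull.iUnion_nat fun i => h _

lemma URamsey.of_null {X O : Set (ℕ → α)} (hO : URamsey U O) (hOX : UNull U (O \ X))
    (hXO : UNull U (X \ O)) : URamsey U X := by
  intro s
  obtain ⟨A, hA, h1⟩ := hO s
  obtain ⟨B, hB, h2⟩ := hOX s
  obtain ⟨C, hC, h3⟩ := hXO s
  refine ⟨_, hA.inter (hB.inter hC), ?_⟩
  have e1 : Box s (fun t => A t ∩ (B t ∩ C t)) ⊆ Box s A := box_mono fun t x hx => hx.1
  have e2 : Box s (fun t => A t ∩ (B t ∩ C t)) ⊆ Box s B := box_mono fun t x hx => hx.2.1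
  have e3 : Box s (fun t => A t ∩ (B t ∩ C t)) ⊆ Box s C := box_mono fun t x hx => hx.2.2
  rcases h1 with h1 | h1
  · refine Or.inl fun x hx => ?_
    by_contra h
    exact h2 (e2 hx) ⟨h1 (e1 hx), h⟩
  · refine Or.inr fun x hx h => ?_
    exact h3 (e3 hx) ⟨h, h1 (e1 hx)⟩

lemma URamsey.iUnion {X : ℕ → Set (ℕ → α)} (h : ∀ i, URamsey U (X i)) :
    URamsey U (⋃ i, X i) := by
  let O : Set (ℕ → α) := {x | ∃ (i n : ℕ) (A : List α → Set α), Lg U A ∧ x ∈ Box (pre x n) A ∧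
    Box (pre x n) A ⊆ X i}
  have hbox : ∀ (i : ℕ) (s : List α) (A : List α → Set α), Lg U A → Box s A ⊆ X i →
      Box s A ⊆ O := by
    intro i s A hA hs x hx
    have e : pre x s.length = s := hx.1
    exact ⟨i, s.length, A, hA, by rwa [e], by rwa [e]⟩
  have hO : UOpen U O := by
    rintro x ⟨i, n, A, hA, hx, hX⟩
    exact ⟨n, A, hA, hx, hbox i _ A hA hX⟩
  refine URamsey.of_null hO.uramsey ?_ ?_
  · intro s
    refine ⟨fun _ => univ, fun _ => Filter.univ_mem, ?_⟩
    rintro x - ⟨⟨i, n, A, hA, hx, hX⟩, h'⟩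
    exact h' (mem_iUnion.2 ⟨i, hX hx⟩)
  · rw [iUnion_sdiff]
    apply UNull.iUnion_nat
    intro i s
    obtain ⟨A, hA, h1⟩ := h i s
    refine ⟨A, hA, ?_⟩
    rcases h1 with h1 | h1
    · exact fun x hx hx' => hx'.2 (hbox i s A hA h1 hx)
    · exact fun x hx hx' => h1 hx hx'.1

variable (U) in
/-- The closure of `Y` with respect to boxes. -/
def UHull (Y : Set (ℕ → α)) : Set (ℕ → α) :=
  {x | ∃ (n : ℕ) (A : List α → Set α), Lg U A ∧ x ∈ Box (pre x n) A ∧ Box (pre x n) A ⊆ Yᶜ}ᶜ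

lemma box_sub_hull_compl {Y : Set (ℕ → α)} {s : List α} {A : List α → Set α} (hA : Lg U A)
    (h : Box s A ⊆ Yᶜ) : Box s A ⊆ (UHull U Y)ᶜ := by
  intro x hx
  have e : pre x s.length = s := hx.1
  rw [UHull, compl_compl]
  exact ⟨s.length, A, hA, by rwa [e], by rwa [e]⟩

lemma uramsey_hull (Y : Set (ℕ → α)) : URamsey U (UHull U Y) := by
  apply URamsey.compl
  apply UOpen.uramsey
  rintro x ⟨n, A, hA, hx, hY⟩
  refine ⟨n, A, hA, hx, ?_⟩
  have := box_sub_hull_compl hA hY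
  rwa [UHull, compl_compl] at this

lemma subset_hull (Y : Set (ℕ → α)) : Y ⊆ UHull U Y := by
  rintro x hx ⟨n, A, hA, hx', hY⟩
  exact hY hx' hx

lemma hull_diff_null {Y Z : Set (ℕ → α)} (hZ : URamsey U Z) (hYZ : Y ⊆ Z) :
    UNull U (UHull U Y \ Z) := by
  intro s
  obtain ⟨A, hA, h1⟩ := ((uramsey_hull (U := U) Y).inter hZ.compl) s
  refine ⟨A, hA, ?_⟩
  rcases h1 with h1 | h1
  · have h2 : Box s A ⊆ Yᶜ := fun x hx hxY => (h1 hx).2 (hYZ hxY)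
    exact fun x hx hx' => box_sub_hull_compl hA h2 hx hx'.1
  · exact h1

lemma URamsey.souslin {F : List ℕ → Set (ℕ → α)} (hF : ∀ s, URamsey U (F s)) :
    URamsey U (SouslinOp F) := by
  let star : List ℕ → Set (ℕ → α) := fun σ =>
    {p | ∃ x : ℕ → ℕ, pre x σ.length = σ ∧ ∀ n, p ∈ F (pre x n)}
  have hs0 : star [] = SouslinOp F := by
    ext p
    simp only [star, SouslinOp, mem_ofPred_eq, mem_iUnion, mem_iInter, ofFn_eq_pre]
    simp [pre]
  have hs1 : ∀ σ, star σ ⊆ F σ := by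
    rintro σ p ⟨x, hx, h⟩
    rw [← hx]; exact h _
  have hs2 : ∀ σ, star σ ⊆ ⋃ n, UHull U (star (σ ++ [n])) := by
    rintro σ p ⟨x, hx, h⟩
    refine mem_iUnion.2 ⟨x σ.length, subset_hull _ ⟨x, ?_, h⟩⟩
    rw [List.length_append, List.length_singleton, pre_succ, hx]
  rw [← hs0]
  have n1 : UNull U (⋃ σ, (UHull U (star σ) \ F σ)) :=
    UNull.iUnion fun σ => hull_diff_null (hF σ) (hs1 σ)
  have n2 : UNull U (⋃ σ, (UHull U (star σ) \ ⋃ n, UHull U (star (σ ++ [n])))) :=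
    UNull.iUnion fun σ => hull_diff_null (URamsey.iUnion fun n => uramsey_hull _) (hs2 σ)
  have n3 := n1.union n2
  refine URamsey.of_null (uramsey_hull (star [])) (n3.mono ?_) (n1.mono ?_)
  · rintro p ⟨hp, hp'⟩
    by_contra hN
    simp only [mem_union, mem_iUnion, not_or, not_exists, mem_sdiff, not_and, not_not,
      not_forall] at hN
    obtain ⟨hN1, hN2⟩ := hN
    obtain ⟨x, hx⟩ := exists_branch
      (fun σ : List ℕ => {n | p ∈ UHull U (star σ) → p ∈ UHull U (star (σ ++ [n]))}) (by
        intro σ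
        by_cases h : p ∈ UHull U (star σ)
        · obtain ⟨n, hn⟩ := hN2 σ h
          exact ⟨n, fun _ => hn⟩
        · exact ⟨0, fun h' => absurd h' h⟩)
    have hall : ∀ n, p ∈ UHull U (star (pre x n)) := by
      intro n
      induction n with
      | zero => rw [pre_zero]; exact hp
      | succ n ih => rw [pre_succ]; exact hx n ih
    exact hp' ⟨x, by simp [pre], fun n => hN1 _ (hall n)⟩
  · rintro p ⟨hp, hp'⟩
    exact absurd (subset_hull _ hp) hp'

end Ramsey
section Codes

/-- Level functions, with the pointwise maximum as multiplication. -/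
def Code : Type := ℕ → ℕ

instance : Semigroup Code where
  mul f g := fun i => max (f i) (g i)
  mul_assoc f g h := by
    funext i
    exact max_assoc (f i) (g i) (h i)

lemma Code.mul_apply (f g : Code) (i : ℕ) : (f * g) i = max (f i) (g i) := rfl

/-- Lowering all levels by `j`. -/
def low (j : ℕ) (f : Code) : Code := fun i => f i - j

lemma low_apply (j : ℕ) (f : Code) (i : ℕ) : low j f i = f i - j := rfl

lemma low_mul (j : ℕ) (f g : Code) : low j (f * g) = low j f * low j g := by
  funext i
  simp only [low_apply, Code.mul_apply]
  omega

lemma low_low (a b : ℕ) (f : Code) : low a (low b f) = low (b + a) f := by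
  funext i
  simp only [low_apply]
  omega

lemma low_zero (f : Code) : low 0 f = f := by
  funext i
  simp only [low_apply]
  omega

/-- The zero level function. -/
def zc : Code := fun _ => 0

lemma zc_mul (f : Code) : zc * f = f := by
  funext i
  simp [Code.mul_apply, zc]

lemma mul_zc (f : Code) : f * zc = f := by
  funext i
  simp [Code.mul_apply, zc]

/-- Finitely supported level functions with maximum `k`. -/
def Valid (k : ℕ) (f : Code) : Prop :=
  (∃ M, ∀ n, M ≤ n → f n = 0) ∧ (∀ n, f n ≤ k) ∧ ∃ n, f n = k

lemma Valid.mul {a b : ℕ} {f g : Code} (hf : Valid a f) (hg : Valid b g) :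
    Valid (max a b) (f * g) := by
  obtain ⟨⟨M, hM⟩, h1, n, hn⟩ := hf
  obtain ⟨⟨M', hM'⟩, h1', n', hn'⟩ := hg
  refine ⟨⟨max M M', fun i hi => ?_⟩, fun i => ?_, ?_⟩
  · rw [Code.mul_apply, hM i (by omega), hM' i (by omega)]; rfl
  · rw [Code.mul_apply]
    have := h1 i
    have := h1' i
    omega
  · rcases le_total a b with h | h
    · refine ⟨n', ?_⟩
      rw [Code.mul_apply]
      have := h1 n'
      omega
    · refine ⟨n, ?_⟩
      rw [Code.mul_apply]
      have := h1' n
      omega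

attribute [local instance] Ultrafilter.semigroup

/-- Cofinite ultrafilters concentrating on level functions of height `k`. -/
def SU (k : ℕ) : Set (Ultrafilter Code) :=
  {u | {f | Valid k f} ∈ u ∧ ∀ m : ℕ, {f : Code | ∀ n < m, f n = 0} ∈ u}

lemma SU.mul {a b : ℕ} {u v : Ultrafilter Code} (hu : u ∈ SU a) (hv : v ∈ SU b) :
    u * v ∈ SU (max a b) := by
  refine ⟨?_, fun m => ?_⟩
  · change ∀ᶠ f in ↑(u * v), Valid (max a b) f
    rw [Ultrafilter.eventually_mul]
    filter_upwards [hu.1] with f hf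
    filter_upwards [hv.1] with g hg
    exact Valid.mul hf hg
  · change ∀ᶠ f : Code in ↑(u * v), ∀ n < m, f n = 0
    rw [Ultrafilter.eventually_mul]
    filter_upwards [hu.2 m] with f hf
    filter_upwards [hv.2 m] with g hg
    intro n hn
    rw [Code.mul_apply, hf n hn, hg n hn]; rfl

lemma map_low_mul (j : ℕ) (u v : Ultrafilter Code) :
    (u * v).map (low j) = u.map (low j) * v.map (low j) := by
  apply Ultrafilter.coe_inj.mp
  apply Filter.ext'
  intro p
  rw [Ultrafilter.eventually_mul]
  simp only [Ultrafilter.coe_map, Filter.eventually_map, Ultrafilter.eventually_mul, low_mul]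

lemma map_low_low (a b : ℕ) (u : Ultrafilter Code) :
    (u.map (low b)).map (low a) = u.map (low (b + a)) := by
  rw [Ultrafilter.map_map]
  congr 1
  funext f
  exact low_low a b f

lemma map_low_zero (u : Ultrafilter Code) : u.map (low 0) = u := by
  have : low 0 = id := by funext f; exact low_zero f
  rw [this, Ultrafilter.map_id]

lemma continuous_map_low (j : ℕ) :
    Continuous (fun u : Ultrafilter Code => u.map (low j)) :=
  ultrafilterBasis_is_basis.continuous_iff.2 <| Set.forall_mem_range.mpr fun s ↦
    ultrafilter_isOpen_basic (low j ⁻¹' s)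

lemma isClosed_SU (k : ℕ) : IsClosed (SU k) := by
  have : SU k = {u | {f | Valid k f} ∈ u} ∩ ⋂ m : ℕ, {u | {f : Code | ∀ n < m, f n = 0} ∈ u} := by
    ext u
    simp [SU]
  rw [this]
  exact (ultrafilter_isClosed_basic _).inter (isClosed_iInter fun m => ultrafilter_isClosed_basic _)

/-- Raising the nonzero levels by one. -/
def raise (f : Code) : Code := fun i => if f i = 0 then 0 else f i + 1

lemma exists_lift {k : ℕ} {u : Ultrafilter Code} (hu : u ∈ SU k) :
    ∃ x ∈ SU (k + 1), x.map (low 1) = u := by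
  rcases Nat.eq_zero_or_pos k with rfl | hk
  · let sg : ℕ → Code := fun n i => if i = n then 1 else 0
    refine ⟨(Filter.hyperfilter ℕ).map sg, ⟨?_, fun m => ?_⟩, ?_⟩
    · rw [Ultrafilter.mem_map]
      filter_upwards with n
      refine ⟨⟨n + 1, fun i hi => ?_⟩, fun i => ?_, n, ?_⟩
      · simp only [sg]; rw [if_neg (by omega)]
      · simp only [sg]; split_ifs <;> omega
      · simp [sg]
    · rw [Ultrafilter.mem_map]
      have : {n | m ≤ n} ∈ Filter.hyperfilter ℕ := by
        have h1 : (Filter.hyperfilter ℕ : Filter ℕ) ≤ Filter.atTop := by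
          rw [← Nat.cofinite_eq_atTop]; exact Filter.hyperfilter_le_cofinite
        exact h1 (Filter.mem_atTop m)
      filter_upwards [this] with n hn
      intro i hi
      have hn' : m ≤ n := hn
      simp only [sg]; rw [if_neg (by omega)]
    · have h0 : ({zc} : Set Code) ∈ u := by
        filter_upwards [hu.1] with f hf
        funext i
        exact Nat.le_zero.1 (hf.2.1 i)
      apply Ultrafilter.eq_of_le
      intro s hs
      have hz : zc ∈ s := by
        have := Filter.inter_mem hs h0
        obtain ⟨f, hf, hf'⟩ := u.neBot.nonempty_of_mem this
        rw [mem_singleton_iff] at hf'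
        rwa [← hf']
      rw [Ultrafilter.mem_coe, Ultrafilter.mem_map, Ultrafilter.mem_map]
      filter_upwards with n
      have : low 1 (sg n) = zc := by
        funext i
        change (if i = n then 1 else 0) - 1 = 0
        split_ifs <;> rfl
      change low 1 (sg n) ∈ s
      rwa [this]
  · refine ⟨u.map raise, ⟨?_, fun m => ?_⟩, ?_⟩
    · rw [Ultrafilter.mem_map]
      filter_upwards [hu.1] with f hf
      obtain ⟨⟨M, hM⟩, h1, n, hn⟩ := hf
      refine ⟨⟨M, fun i hi => ?_⟩, fun i => ?_, n, ?_⟩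
      · simp [raise, hM i hi]
      · have := h1 i
        simp only [raise]; split_ifs <;> omega
      · simp only [raise]; split_ifs <;> omega
    · rw [Ultrafilter.mem_map]
      filter_upwards [hu.2 m] with f hf
      intro n hn
      simp [raise, hf n hn]
    · rw [Ultrafilter.map_map]
      have : low 1 ∘ raise = id := by
        funext f i
        simp only [comp_apply, low_apply, raise, id]
        split_ifs <;> omega
      rw [this, Ultrafilter.map_id]

lemma exists_gowers_uf (k : ℕ) : ∃ u ∈ SU k, ∀ a, u * u.map (low a) = u ∧ u.map (low a) * u = u := by
  induction k with
  | zero =>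
    have hz : ∀ a, (pure zc : Ultrafilter Code).map (low a) = pure zc := by
      intro a
      have : low a zc = zc := by funext i; simp [low_apply, zc]
      conv_rhs => rw [← this]
      rfl
    have hm : (pure zc : Ultrafilter Code) * pure zc = pure zc := by
      have : zc * zc = zc := zc_mul _
      conv_rhs => rw [← this]
      rfl
    refine ⟨pure zc, ⟨?_, fun m => ?_⟩, fun a => ?_⟩
    · rw [Ultrafilter.mem_pure]
      exact ⟨⟨0, fun _ _ => rfl⟩, fun _ => le_rfl, 0, rfl⟩
    · rw [Ultrafilter.mem_pure]
      exact fun _ _ => rfl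
    · rw [hz, hm]; exact ⟨rfl, rfl⟩
  | succ k ih =>
    obtain ⟨u, hu, hua⟩ := ih
    have huu : u * u = u := by have := (hua 0).1; rwa [map_low_zero] at this
    let S : Set (Ultrafilter Code) := {x | x ∈ SU (k + 1) ∧ x.map (low 1) = u}
    have hS : IsClosed S := (isClosed_SU _).inter
      ((isClosed_singleton (x := u)).preimage (continuous_map_low 1))
    have hSc : IsCompact ((· * u) '' S) :=
      hS.isCompact.image (Ultrafilter.continuous_mul_left u)
    have hSn : S.Nonempty := by
      obtain ⟨x, hx, hx'⟩ := exists_lift hu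
      exact ⟨x, hx, hx'⟩
    obtain ⟨v, ⟨x, hx, rfl⟩, hv⟩ := exists_idempotent_in_compact_subsemigroup
      (M := Ultrafilter Code) Ultrafilter.continuous_mul_left ((· * u) '' S) (hSn.image _) hSc (by
        rintro _ ⟨x, hx, rfl⟩ _ ⟨y, hy, rfl⟩
        refine ⟨x * u * y, ⟨?_, ?_⟩, ?_⟩
        · have := SU.mul (SU.mul hx.1 hu) hy.1
          simpa using this
        · rw [map_low_mul, map_low_mul, hx.2, hy.2, (hua 1).1, huu]
        · simp only [mul_assoc])
    simp only at hv
    have hT : (u * (x * u)).map (low 1) = u := by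
      rw [map_low_mul, map_low_mul, hx.2, (hua 1).1, (hua 1).2]
    refine ⟨u * (x * u), ?_, fun a => ?_⟩
    · have := SU.mul hu (SU.mul hx.1 hu)
      simpa using this
    · rcases a with _ | a
      · rw [map_low_zero]
        have : u * (x * u) * (u * (x * u)) = u * (x * u) := by
          calc u * (x * u) * (u * (x * u)) = u * (x * (u * u) * (x * u)) := by
                simp only [mul_assoc]
            _ = u * (x * u * (x * u)) := by rw [huu]
            _ = _ := by rw [hv]
        exact ⟨this, this⟩
      · have : (u * (x * u)).map (low (a + 1)) = u.map (low a) := by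
          rw [add_comm, ← map_low_low, hT]
        rw [this]
        constructor
        · rw [mul_assoc, mul_assoc, (hua a).1]
        · rw [← mul_assoc, (hua a).2]

/-- `Good` labels. -/
def Good (U : Ultrafilter Code) (k : ℕ) (B : Set Code) (h : ℕ) (w : Code) : Prop :=
  ∀ a ≤ k, max h (k - a) = k → ∀ᶠ q in U, w * low a q ∈ B

variable {U : Ultrafilter Code} {k : ℕ}

lemma low_mul_low (hU : ∀ a, U * U.map (low a) = U ∧ U.map (low a) * U = U) (a b : ℕ) :
    U.map (low a) * U.map (low b) = U.map (low (min a b)) := by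
  rcases le_total a b with h | h
  · obtain ⟨c, rfl⟩ := Nat.exists_eq_add_of_le h
    rw [min_eq_left h, add_comm, ← map_low_low, ← map_low_mul, (hU c).1]
  · obtain ⟨c, rfl⟩ := Nat.exists_eq_add_of_le h
    rw [min_eq_right h, add_comm, ← map_low_low, ← map_low_mul, (hU c).2]

lemma Good.step (hU : ∀ a, U * U.map (low a) = U ∧ U.map (low a) * U = U)
    {B : Set Code} {h : ℕ} {w : Code} (hg : Good U k B h w) {a : ℕ} (ha : a ≤ k) :
    ∀ᶠ q in U, Good U k B (max h (k - a)) (w * low a q) := by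
  have key : ∀ b ∈ Finset.range (k + 1), ∀ᶠ q in U,
      max (max h (k - a)) (k - b) = k → ∀ᶠ q' in U, w * low a q * low b q' ∈ B := by
    intro b hb
    rw [Finset.mem_range] at hb
    by_cases hm : max (max h (k - a)) (k - b) = k
    · have h1 := hg (min a b) (by omega) (by omega)
      have h2 : ∀ᶠ r in (U.map (low (min a b)) : Filter Code), w * r ∈ B := h1
      rw [← low_mul_low hU, Ultrafilter.eventually_mul] at h2
      have h3 : ∀ᶠ q in U, ∀ᶠ q' in U, w * (low a q * low b q') ∈ B := h2
      filter_upwards [h3] with q hq _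
      filter_upwards [hq] with q' hq'
      rwa [mul_assoc]
    · filter_upwards with q h'
      exact absurd h' hm
  have := (Filter.eventually_all_finset _).2 key
  filter_upwards [this] with q hq b hb hm
  exact hq b (Finset.mem_range.2 (by omega)) hm

lemma Good.start {B : Set Code} (hB : B ∈ U) (hk : 1 ≤ k) : Good U k B 0 zc := by
  intro a ha h
  have : a = 0 := by omega
  subst this
  filter_upwards [hB] with q hq
  rwa [zc_mul, low_zero]

lemma low_top {f : Code} (hf : Valid k f) {a : ℕ} (ha : k ≤ a) : low a f = zc := by
  funext i
  have := hf.2.1 i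
  simp only [low_apply, zc]
  omega

lemma Good.mem (hUk : U ∈ SU k) {B : Set Code} {w : Code} (h : Good U k B k w) : w ∈ B := by
  have h1 := h k le_rfl (by simp)
  obtain ⟨q, hq, hq'⟩ := (h1.and hUk.1).exists
  rwa [low_top hq' le_rfl, mul_zc] at hq

/-- One-step extensions of a configuration. -/
def ext1 (k : ℕ) (q : Code) (c : List Code × Code × ℕ) (a : ℕ) : List Code × Code × ℕ :=
  (c.1, c.2.1 * low a q, max c.2.2 (k - a))

/-- Completing a configuration. -/
def compl1 (c : List Code × Code × ℕ) : List Code × Code × ℕ :=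
  (c.1 ++ [c.2.1], zc, 0)

/-- Configurations reachable with the (reversed) list of codes. -/
def Cfg (k : ℕ) : List Code → Set (List Code × Code × ℕ)
  | [] => {([], zc, 0)}
  | q :: l =>
    {c | ∃ a ≤ k, ∃ d ∈ Cfg k l, c = ext1 k q d a} ∪
    {c | ∃ a ≤ k, ∃ d ∈ Cfg k l, (ext1 k q d a).2.2 = k ∧ c = compl1 (ext1 k q d a)}

lemma Cfg_finite (l : List Code) : (Cfg k l).Finite := by
  induction l with
  | nil => exact Set.finite_singleton _
  | cons q l ih =>
    have h1 : (Set.image2 (fun d a => ext1 k q d a) (Cfg k l) (Set.Iic k)).Finite :=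
      ih.image2 _ (Set.finite_Iic k)
    refine Set.Finite.subset (h1.union (h1.image compl1)) ?_
    rintro c (⟨a, ha, d, hd, rfl⟩ | ⟨a, ha, d, hd, -, rfl⟩)
    · exact Or.inl ⟨d, hd, a, ha, rfl⟩
    · exact Or.inr ⟨_, ⟨d, hd, a, ha, rfl⟩, rfl⟩

/-- A good configuration. -/
def GoodC (U : Ultrafilter Code) (k : ℕ) (A : List Code → Set Code)
    (c : List Code × Code × ℕ) : Prop := Good U k (A c.1) c.2.2 c.2.1

lemma GoodC_step (hU : ∀ a, U * U.map (low a) = U ∧ U.map (low a) * U = U) (hk : 1 ≤ k)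
    {A : List Code → Set Code} (hA : Lg U A) {l : List Code}
    (hl : ∀ c ∈ Cfg k l, GoodC U k A c) :
    ∀ᶠ q in U, ∀ c ∈ Cfg k (q :: l), GoodC U k A c := by
  have h1 : ∀ c ∈ Cfg k l, ∀ᶠ q in U, ∀ a ∈ Finset.range (k + 1), GoodC U k A (ext1 k q c a) := by
    intro c hc
    rw [Filter.eventually_all_finset]
    intro a ha
    rw [Finset.mem_range] at ha
    exact (hl c hc).step hU (by omega)
  have h2 := (Filter.eventually_all_finite (Cfg_finite (k := k) l)).2 h1
  filter_upwards [h2] with q hq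
  rintro c (⟨a, ha, d, hd, rfl⟩ | ⟨a, ha, d, hd, -, rfl⟩)
  · exact hq d hd a (Finset.mem_range.2 (by omega))
  · exact Good.start (hA _) hk

/-- Block sequences of codes. -/
def CBlock (k : ℕ) (x : ℕ → Code) : Prop :=
  (∀ n, Valid k (x n)) ∧ ∀ m n, m < n → ∀ i j, x m i ≠ 0 → x n j ≠ 0 → i < j

/-- Partial substitution. -/
def sbs (k : ℕ) (q : ℕ → Code) (g : Code) : ℕ → Code
  | 0 => zc
  | n + 1 => sbs k q g n * low (k - g n) (q n)

/-- Partial maxima. -/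
def pmax (g : Code) : ℕ → ℕ
  | 0 => 0
  | n + 1 => max (pmax g n) (g n)

lemma exists_q (hUk : U ∈ SU k) (hU : ∀ a, U * U.map (low a) = U ∧ U.map (low a) * U = U)
    (hk : 1 ≤ k) {A : List Code → Set Code} (hA : Lg U A) :
    ∃ q : ℕ → Code, CBlock k q ∧ ∀ N, ∀ c ∈ Cfg k (pre q N).reverse, GoodC U k A c := by
  let B : List Code → Set Code := fun l => {q | Valid k q ∧
    (∀ p ∈ {p | p ∈ l}, Valid k p → ∀ i j, p i ≠ 0 → q j ≠ 0 → i < j) ∧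
    ((∀ c ∈ Cfg k l.reverse, GoodC U k A c) → ∀ c ∈ Cfg k (q :: l.reverse), GoodC U k A c)}
  have hB : ∀ l, B l ∈ U := by
    intro l
    have h1 : ∀ᶠ q in U, Valid k q := hUk.1
    have h2 : ∀ᶠ q : Code in U, ∀ p ∈ {p | p ∈ l}, Valid k p → ∀ i j, p i ≠ 0 → q j ≠ 0 → i < j := by
      refine (Filter.eventually_all_finite (List.finite_toSet l)).2 ?_
      intro p _
      by_cases hp : Valid k p
      · obtain ⟨M, hM⟩ := hp.1
        filter_upwards [hUk.2 M] with q hq _ i j hi hj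
        by_contra hij
        by_cases hiM : M ≤ i
        · exact hi (hM i hiM)
        · exact hj (hq j (by omega))
      · filter_upwards with q h
        exact absurd h hp
    have h3 : ∀ᶠ q in U, ((∀ c ∈ Cfg k l.reverse, GoodC U k A c) →
        ∀ c ∈ Cfg k (q :: l.reverse), GoodC U k A c) := by
      by_cases h : ∀ c ∈ Cfg k l.reverse, GoodC U k A c
      · filter_upwards [GoodC_step hU hk hA h] with q hq _
        exact hq
      · filter_upwards with q h'
        exact absurd h' h
    filter_upwards [h1, h2, h3] with q a b c
    exact ⟨a, b, c⟩
  obtain ⟨q, hq⟩ := exists_branch B (fun l => U.neBot.nonempty_of_mem (hB l))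
  refine ⟨q, ⟨fun n => (hq n).1, fun m n hmn i j hi hj => ?_⟩, fun N => ?_⟩
  · refine (hq n).2.1 (q m) ?_ (hq m).1 i j hi hj
    change q m ∈ pre q n
    simp only [pre, List.mem_map, List.mem_range]
    exact ⟨m, hmn, rfl⟩
  · induction N with
    | zero =>
      intro c hc
      have : c = ([], zc, 0) := hc
      rw [this]
      exact Good.start (hA _) hk
    | succ N ih =>
      rw [pre_succ, List.reverse_append, List.reverse_singleton, List.singleton_append]
      exact (hq N).2.2 ih

lemma Valid.last (hk : 1 ≤ k) {g : Code} (hg : Valid k g) :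
    ∃ L, g L ≠ 0 ∧ ∀ n, L < n → g n = 0 := by
  classical
  obtain ⟨h, -, n, hn⟩ := hg
  have h1 := Nat.find_spec h
  have h2 : Nat.find h ≠ 0 := by
    intro h0
    have := h1 n (by omega)
    omega
  refine ⟨Nat.find h - 1, fun h0 => ?_, fun n hn => h1 n (by omega)⟩
  refine Nat.find_min h (m := Nat.find h - 1) (by omega) fun n hn => ?_
  rcases Nat.eq_or_lt_of_le hn with h' | h'
  · rw [← h']; exact h0
  · exact h1 n (by omega)

lemma sbs_zero {q : ℕ → Code} (hq : CBlock k q) {g : Code} {N : ℕ} (hg : ∀ i < N, g i = 0) :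
    sbs k q g N = zc ∧ pmax g N = 0 := by
  induction N with
  | zero => exact ⟨rfl, rfl⟩
  | succ N ih =>
    obtain ⟨h1, h2⟩ := ih fun i hi => hg i (by omega)
    rw [sbs, pmax, h1, h2, hg N (by omega), low_top (hq.1 N) (by omega), mul_zc]
    exact ⟨rfl, rfl⟩

lemma sbs_cfg {q : ℕ → Code} (hq : CBlock k q) {g : Code} (hgk : ∀ n, g n ≤ k) {N₀ N : ℕ}
    (hN : N₀ ≤ N) (hg : ∀ i < N₀, g i = 0) {t : List Code}
    (ht : (t, zc, 0) ∈ Cfg k (pre q N₀).reverse) :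
    (t, sbs k q g N, pmax g N) ∈ Cfg k (pre q N).reverse := by
  induction N, hN using Nat.le_induction with
  | base =>
    obtain ⟨h1, h2⟩ := sbs_zero hq hg
    rwa [h1, h2]
  | succ N hN ih =>
    rw [pre_succ, List.reverse_append, List.reverse_singleton, List.singleton_append]
    refine Or.inl ⟨k - g N, by omega, _, ih, ?_⟩
    have := hgk N
    simp only [ext1, sbs, pmax]
    rw [show k - (k - g N) = g N by omega]

lemma le_pmax (g : Code) {n N : ℕ} (h : n < N) : g n ≤ pmax g N := by
  induction N with
  | zero => omega
  | succ N ih =>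
    rw [pmax]
    rcases Nat.lt_succ_iff_lt_or_eq.1 h with h | rfl
    · exact (ih h).trans (le_max_left _ _)
    · exact le_max_right _ _

lemma pmax_le (g : Code) (hgk : ∀ n, g n ≤ k) (N : ℕ) : pmax g N ≤ k := by
  induction N with
  | zero => exact Nat.zero_le _
  | succ N ih => exact max_le ih (hgk N)

lemma sbs_cfg_compl {q : ℕ → Code} (hq : CBlock k q) {g : Code} (hg : Valid k g) {N₀ L : ℕ}
    (hN : N₀ ≤ L) (hg0 : ∀ i < N₀, g i = 0) (hL : ∀ n, L < n → g n = 0) (hk : 1 ≤ k)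
    {t : List Code} (ht : (t, zc, 0) ∈ Cfg k (pre q N₀).reverse) :
    (t, sbs k q g (L + 1), k) ∈ Cfg k (pre q (L + 1)).reverse ∧
    (t ++ [sbs k q g (L + 1)], zc, 0) ∈ Cfg k (pre q (L + 1)).reverse := by
  have hm : pmax g (L + 1) = k := by
    obtain ⟨n, hn⟩ := hg.2.2
    have : n < L + 1 := by
      by_contra h
      have := hL n (by omega)
      omega
    have := le_pmax g this
    have := pmax_le g hg.2.1 (L + 1)
    omega
  have h1 := sbs_cfg hq hg.2.1 (show N₀ ≤ L + 1 by omega) hg0 ht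
  rw [hm] at h1
  refine ⟨h1, ?_⟩
  have h2 := sbs_cfg hq hg.2.1 hN hg0 ht
  rw [pre_succ, List.reverse_append, List.reverse_singleton, List.singleton_append]
  have h3 := hg.2.1 L
  have e : max (pmax g L) (k - (k - g L)) = k := by
    rw [show k - (k - g L) = g L by omega]; exact hm
  refine Or.inr ⟨k - g L, by omega, _, h2, e, ?_⟩
  simp only [compl1, ext1, sbs]

lemma sbs_apply {q : ℕ → Code} (hq : CBlock k q) {g : Code} {l i : ℕ}
    (hl : q l i ≠ 0) (N : ℕ) : sbs k q g N i = if l < N then q l i - (k - g l) else 0 := by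
  have uniq : ∀ n, n ≠ l → q n i = 0 := by
    intro n hn
    by_contra h
    rcases lt_or_gt_of_ne hn with h' | h'
    · exact lt_irrefl _ (hq.2 n l h' i i h hl)
    · exact lt_irrefl _ (hq.2 l n h' i i hl h)
  induction N with
  | zero => simp [sbs, zc]
  | succ N ih =>
    rw [sbs, Code.mul_apply, ih, low_apply]
    by_cases h : N = l
    · subst h; simp
    · rw [uniq N h]
      by_cases h2 : l < N
      · rw [if_pos h2, if_pos (by omega)]; simp
      · rw [if_neg h2, if_neg (by omega)]; simp

lemma sbs_apply_zero {q : ℕ → Code} {g : Code} {i : ℕ}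
    (hl : ∀ l, q l i = 0) (N : ℕ) : sbs k q g N i = 0 := by
  induction N with
  | zero => rfl
  | succ N ih => rw [sbs, Code.mul_apply, ih, low_apply, hl]; simp

lemma sbs_bdd {q : ℕ → Code} (hq : CBlock k q) (g : Code) (N : ℕ) :
    ∃ M, ∀ n, M ≤ n → sbs k q g N n = 0 := by
  induction N with
  | zero => exact ⟨0, fun _ _ => rfl⟩
  | succ N ih =>
    obtain ⟨M, hM⟩ := ih
    obtain ⟨M', hM'⟩ := (hq.1 N).1
    refine ⟨max M M', fun n hn => ?_⟩
    rw [sbs, Code.mul_apply, low_apply, hM n (by omega), hM' n (by omega)]; simp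

lemma exists_q_main (hUk : U ∈ SU k)
    (hU : ∀ a, U * U.map (low a) = U ∧ U.map (low a) * U = U)
    (hk : 1 ≤ k) {A : List Code → Set Code} (hA : Lg U A) :
    ∃ q : ℕ → Code, CBlock k q ∧ ∀ g : ℕ → Code, CBlock k g →
      ∃ x : ℕ → Code, x ∈ Box [] A ∧ CBlock k x ∧
        (∀ m l i, q l i ≠ 0 → x m i = q l i - (k - g m l)) ∧
        (∀ m i, (∀ l, q l i = 0) → x m i = 0) := by
  obtain ⟨q, hq, hgood⟩ := exists_q hUk hU hk hA
  refine ⟨q, hq, fun g hg => ?_⟩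
  choose L hL0 hL using fun m => (hg.1 m).last hk
  let x : ℕ → Code := fun m => sbs k q (g m) (L m + 1)
  have hx1 : ∀ m l i, q l i ≠ 0 → x m i = q l i - (k - g m l) := by
    intro m l i h
    simp only [x]
    rw [sbs_apply hq h]
    split_ifs with h'
    · rfl
    · have := (hq.1 l).2.1 i
      rw [hL m l (by omega)]
      omega
  have hx2 : ∀ m i, (∀ l, q l i = 0) → x m i = 0 := fun m i h => sbs_apply_zero h _
  have hx3 : ∀ m i, x m i ≠ 0 → ∃ l, q l i ≠ 0 ∧ g m l ≠ 0 := by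
    intro m i h
    by_cases h' : ∀ l, q l i = 0
    · exact absurd (hx2 m i h') h
    · push Not at h'
      obtain ⟨l, hl⟩ := h'
      refine ⟨l, hl, fun h0 => h ?_⟩
      have := (hq.1 l).2.1 i
      rw [hx1 m l i hl, h0]
      omega
  have hcfg : ∀ m, (pre x m, zc, 0) ∈ Cfg k (pre q (if m = 0 then 0 else L (m - 1) + 1)).reverse ∧
      ∀ i < (if m = 0 then 0 else L (m - 1) + 1), g m i = 0 := by
    have hz : ∀ m, ∀ i < (if m = 0 then 0 else L (m - 1) + 1), g m i = 0 := by
      intro m i hi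
      split_ifs at hi with h
      · omega
      · by_contra h'
        have := hg.2 (m - 1) m (by omega) (L (m - 1)) i (hL0 _) h'
        omega
    intro m
    refine ⟨?_, hz m⟩
    induction m with
    | zero => exact rfl
    | succ m ih =>
      rw [if_neg (by omega), Nat.add_sub_cancel, pre_succ x]
      refine (sbs_cfg_compl hq (hg.1 m) ?_ (hz m) (hL m) hk ih).2
      by_contra h'
      exact hL0 m (hz m _ (by omega))
  refine ⟨x, ⟨by simp [pre], fun m _ => ?_⟩, ⟨fun m => ⟨?_, ?_, ?_⟩, ?_⟩, hx1, hx2⟩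
  · obtain ⟨h1, h2⟩ := hcfg m
    have h3 := (sbs_cfg_compl hq (hg.1 m) (by
      by_contra h'
      exact hL0 m (h2 _ (by omega))) h2 (hL m) hk h1).1
    exact Good.mem hUk (hgood _ _ h3)
  · exact sbs_bdd hq _ _
  · intro i
    by_cases h' : ∀ l, q l i = 0
    · rw [hx2 m i h']; omega
    · push Not at h'
      obtain ⟨l, hl⟩ := h'
      have := (hq.1 l).2.1 i
      rw [hx1 m l i hl]
      omega
  · obtain ⟨l, hl⟩ := (hg.1 m).2.2
    obtain ⟨i, hi⟩ := (hq.1 l).2.2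
    refine ⟨i, ?_⟩
    rw [hx1 m l i (by omega), hi, hl]
    omega
  · intro m n hmn i j hi hj
    obtain ⟨l, hl, hl'⟩ := hx3 m i hi
    obtain ⟨r, hr, hr'⟩ := hx3 n j hj
    exact hq.2 l r (hg.2 m n hmn l r hl' hr') i j hl hr

end Codes

section Final

/-- The sign `(-1)^n`. -/
def sg (n : ℕ) : ℤ := (-1) ^ n

lemma sg_cases (n : ℕ) : sg n = 1 ∨ sg n = -1 := neg_one_pow_eq_or ℤ n

lemma sg_zero : sg 0 = 1 := by simp [sg]

lemma sg_succ (n : ℕ) : sg (n + 1) = - sg n := by simp [sg, pow_succ]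

lemma sg_add (m n : ℕ) : sg (m + n) = sg m * sg n := by simp [sg, pow_add]

/-- Scalar version of the iterated tetris operation. -/
def sh (j : ℕ) (z : ℤ) : ℤ := if 0 < z then max (z - j) 0 else min (z + j) 0

lemma sh_zero (z : ℤ) : sh 0 z = z := by
  unfold sh; split_ifs <;> omega

lemma sh_of_zero (j : ℕ) : sh j 0 = 0 := by
  unfold sh; split_ifs <;> omega

lemma sh_sh (i j : ℕ) (z : ℤ) : sh j (sh i z) = sh (i + j) z := by
  unfold sh; push_cast; split_ifs <;> omega

lemma sh_neg (j : ℕ) (z : ℤ) : sh j (-z) = - sh j z := by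
  unfold sh; split_ifs <;> omega

lemma sh_big {j : ℕ} {z : ℤ} (h : |z| ≤ j) : sh j z = 0 := by
  rw [abs_le] at h
  unfold sh; split_ifs <;> omega

lemma sh_abs (j : ℕ) (z : ℤ) : |sh j z| ≤ |z| := by
  rcases abs_cases (sh j z) with h | h <;> rcases abs_cases z with h' | h' <;>
    unfold sh at * <;> split_ifs at * <;> omega

lemma sh_ne {j : ℕ} {z : ℤ} (h : (j : ℤ) < |z|) : sh j z ≠ 0 := by
  rcases abs_cases z with h' | h' <;> unfold sh <;> split_ifs <;> omega

lemma sh_succ_diff (j : ℕ) (z : ℤ) : |sh j z - sh (j + 1) z| ≤ 1 := by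
  rw [abs_le]
  unfold sh; push_cast; split_ifs <;> omega

lemma sh_sign {e : ℤ} (he : e = 1 ∨ e = -1) (j : ℕ) (z : ℤ) : sh j (e * z) = e * sh j z := by
  rcases he with rfl | rfl
  · simp
  · simp [sh_neg]

lemma tetris_sh (p : ℕ → ℤ) (z : ℕ) : tetris p z = sh 1 (p z) := by
  unfold tetris sh; split_ifs <;> omega

lemma tetris_iter (j : ℕ) (p : ℕ → ℤ) (z : ℕ) : tetris^[j] p z = sh j (p z) := by
  induction j generalizing p with
  | zero => simp [sh_zero]
  | succ j ih =>
    rw [Function.iterate_succ_apply, ih, tetris_sh, sh_sh, add_comm]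

/-- The value at a point with `P`-value `z` of the code level `a`. -/
def phi (k a : ℕ) (z : ℤ) : ℤ := sg (k - a) * sh (k - a) z

lemma phi_zero {k : ℕ} {z : ℤ} (h : |z| ≤ k) : phi k 0 z = 0 := by
  simp [phi, sh_big h]

lemma phi_sub {k a : ℕ} (d : ℕ) {v : ℤ} (ha : a ≤ k) (hv : |v| ≤ k) :
    phi k (a - d) v = sg (k - a + d) * sh (k - a + d) v := by
  by_cases h : d ≤ a
  · have : k - (a - d) = k - a + d := by omega
    rw [phi, this]
  · have : a - d = 0 := by omega
    rw [this, phi_zero hv, sh_big, mul_zero]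
    refine hv.trans ?_
    push_cast [ha]
    omega

lemma phi_abs (k a : ℕ) (z : ℤ) : |phi k a z| ≤ |z| := by
  unfold phi
  rcases sg_cases (k - a) with h | h <;> simp [h, sh_abs]

lemma IsBlockSeq.own {k : ℕ} {P : ℕ → ℕ → ℤ} (hP : IsBlockSeq k P) {m n z : ℕ}
    (hm : P m z ≠ 0) (hn : P n z ≠ 0) : m = n := by
  rcases lt_trichotomy m n with h | h | h
  · exact absurd (hP.2 m n h z z hm hn) (lt_irrefl _)
  · exact h
  · exact absurd (hP.2 n m h z z hn hm) (lt_irrefl _)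

lemma CBlock.own {k : ℕ} {x : ℕ → Code} (hx : CBlock k x) {m n i : ℕ}
    (hm : x m i ≠ 0) (hn : x n i ≠ 0) : m = n := by
  rcases lt_trichotomy m n with h | h | h
  · exact absurd (hx.2 m n h i i hm hn) (lt_irrefl _)
  · exact h
  · exact absurd (hx.2 n m h i i hn hm) (lt_irrefl _)

open Classical in
/-- The vector coded by `f` relative to `P`. -/
noncomputable def img (k : ℕ) (P : ℕ → ℕ → ℤ) (f : Code) (z : ℕ) : ℤ :=
  if h : ∃ n, P n z ≠ 0 then phi k (f h.choose) (P h.choose z) else 0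

variable {k : ℕ} {P : ℕ → ℕ → ℤ}

lemma img_of (hP : IsBlockSeq k P) (f : Code) {n z : ℕ} (h : P n z ≠ 0) :
    img k P f z = phi k (f n) (P n z) := by
  have hh : ∃ n, P n z ≠ 0 := ⟨n, h⟩
  have := hP.own hh.choose_spec h
  rw [img, dif_pos hh, this]

lemma img_none (f : Code) {z : ℕ} (h : ∀ n, P n z = 0) : img k P f z = 0 := by
  rw [img, dif_neg]
  push Not
  exact h

lemma img_ne (hP : IsBlockSeq k P) {f : Code} {z : ℕ} (h : img k P f z ≠ 0) :
    ∃ n, P n z ≠ 0 ∧ f n ≠ 0 := by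
  by_cases hh : ∃ n, P n z ≠ 0
  · obtain ⟨n, hn⟩ := hh
    refine ⟨n, hn, fun h0 => h ?_⟩
    rw [img_of hP f hn, h0, phi_zero ((hP.1 n).2.1 z)]
  · push Not at hh
    exact absurd (img_none f hh) h

lemma phi_top (k : ℕ) (z : ℤ) : phi k k z = z := by
  simp [phi, sg_zero, sh_zero]

lemma img_block (hk : 1 ≤ k) (hP : IsBlockSeq k P) {x : ℕ → Code} (hx : CBlock k x) :
    IsBlockSeq k (fun m => img k P (x m)) := by
  refine ⟨fun m => ⟨?_, ?_, ?_⟩, ?_⟩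
  · obtain ⟨M, hM⟩ := (hx.1 m).1
    refine ((Set.finite_lt_nat M).biUnion (t := fun n => Function.support (P n))
      fun n _ => (hP.1 n).1).subset ?_
    intro z hz
    obtain ⟨n, h1, h2⟩ := img_ne hP hz
    simp only [Set.mem_iUnion]
    refine ⟨n, ?_, h1⟩
    by_contra hc
    exact h2 (hM n (not_lt.1 hc))
  · intro z
    by_cases hh : ∃ n, P n z ≠ 0
    · obtain ⟨n, hn⟩ := hh
      show |img k P (x m) z| ≤ k
      rw [img_of hP _ hn]
      exact (phi_abs _ _ _).trans ((hP.1 n).2.1 z)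
    · push Not at hh
      simp [img_none _ hh]
  · obtain ⟨n, hn⟩ := (hx.1 m).2.2
    obtain ⟨z, hz⟩ := (hP.1 n).2.2
    refine ⟨z, ?_⟩
    have : P n z ≠ 0 := by
      intro h0
      rw [h0] at hz
      simp at hz
      omega
    show |img k P (x m) z| = k
    rw [img_of hP _ this, hn, phi_top, hz]
  · intro m m' hmm z z' hz hz'
    obtain ⟨n, h1, h2⟩ := img_ne hP hz
    obtain ⟨n', h1', h2'⟩ := img_ne hP hz'
    exact hP.2 n n' (hx.2 m m' hmm n n' h2 h2') z z' h1 h1'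

lemma span_elim {Q : ℕ → ℕ → ℤ} {q : ℕ → ℤ} (hQ : ∀ n z, |Q n z| ≤ k)
    (h : InSpanPM k Q q) : ∃ (g : Code) (E : ℕ → ℤ), Valid k g ∧ (∀ n, E n = 1 ∨ E n = -1) ∧
      ∀ n z, (∀ n', n' ≠ n → Q n' z = 0) → q z = E n * sh (k - g n) (Q n z) := by
  classical
  obtain ⟨m, N, ε, j, hN, hε, hj, ⟨i0, hi0⟩, rfl⟩ := h
  have hinj := hN.injective
  let g : Code := fun n => if h : ∃ i, N i = n then k - j h.choose else 0
  let E : ℕ → ℤ := fun n => if h : ∃ i, N i = n then ε h.choose else 1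
  have hg : ∀ i, g (N i) = k - j i := by
    intro i
    have hh : ∃ i', N i' = N i := ⟨i, rfl⟩
    have := hinj hh.choose_spec
    simp only [g]
    rw [dif_pos hh, this]
  have hE : ∀ i, E (N i) = ε i := by
    intro i
    have hh : ∃ i', N i' = N i := ⟨i, rfl⟩
    have := hinj hh.choose_spec
    simp only [E]
    rw [dif_pos hh, this]
  have hg0 : ∀ n, (¬ ∃ i, N i = n) → g n = 0 := fun n h => dif_neg h
  have hgk : ∀ n, g n ≤ k := by
    intro n
    simp only [g]
    split_ifs <;> omega
  refine ⟨g, E, ⟨⟨N (Fin.last m) + 1, ?_⟩, hgk, N i0, ?_⟩, ?_, ?_⟩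
  · intro n hn
    apply hg0
    rintro ⟨i, rfl⟩
    have := hN.monotone (Fin.le_last i)
    omega
  · rw [hg, hi0]; rfl
  · intro n
    simp only [E]
    split_ifs
    · exact hε _
    · simp
  · intro n z hz
    rw [Finset.sum_apply]
    by_cases hh : ∃ i, N i = n
    · obtain ⟨i, rfl⟩ := hh
      rw [Finset.sum_eq_single i]
      · rw [hg, hE, Pi.smul_apply, tetris_iter, smul_eq_mul]
        have := hj i
        congr 2
        omega
      · intro b _ hb
        rw [Pi.smul_apply, tetris_iter, hz _ (fun h => hb (hinj h)), sh_of_zero, smul_zero]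
      · intro h; exact absurd (Finset.mem_univ _) h
    · rw [hg0 n hh, Nat.sub_zero, sh_big (hQ n z), mul_zero]
      refine Finset.sum_eq_zero fun i _ => ?_
      rw [Pi.smul_apply, tetris_iter, hz _ (fun h => hh ⟨i, h⟩), sh_of_zero, smul_zero]

lemma img_span (hk : 1 ≤ k) (hP : IsBlockSeq k P) {f : Code} (hf : Valid k f) :
    InSpanPM k P (img k P f) := by
  classical
  obtain ⟨⟨M, hM⟩, hle, n0, hn0⟩ := hf
  let S : Finset ℕ := (Finset.range M).filter fun n => f n ≠ 0
  have hS : ∀ n, n ∈ S ↔ f n ≠ 0 := by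
    intro n
    simp only [S, Finset.mem_filter, Finset.mem_range, and_iff_right_iff_imp]
    intro h
    by_contra hc
    exact h (hM n (not_lt.1 hc))
  have hn0S : n0 ∈ S := (hS _).2 (by omega)
  obtain ⟨m, hm⟩ : ∃ m, S.card = m + 1 :=
    ⟨S.card - 1, by have := Finset.card_pos.2 ⟨n0, hn0S⟩; omega⟩
  have hsurj : ∀ n ∈ S, ∃ i, S.orderEmbOfFin hm i = n := by
    intro n hn
    have : n ∈ Set.range (S.orderEmbOfFin hm) := by
      rw [Finset.range_orderEmbOfFin]; exact hn
    exact this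
  have hmem : ∀ i, f (S.orderEmbOfFin hm i) ≠ 0 := fun i =>
    (hS _).1 (Finset.orderEmbOfFin_mem S hm i)
  refine ⟨m, S.orderEmbOfFin hm, fun i => sg (k - f (S.orderEmbOfFin hm i)),
    fun i => k - f (S.orderEmbOfFin hm i), (S.orderEmbOfFin hm).strictMono,
    fun i => sg_cases _, fun i => ?_, ?_, ?_⟩
  · have := hmem i
    show k - f (S.orderEmbOfFin hm i) < k
    omega
  · obtain ⟨i, hi⟩ := hsurj n0 hn0S
    exact ⟨i, by show k - f (S.orderEmbOfFin hm i) = 0; rw [hi, hn0]; simp⟩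
  · funext z
    rw [Finset.sum_apply]
    by_cases hh : ∃ n, P n z ≠ 0
    · obtain ⟨n, hn⟩ := hh
      rw [img_of hP f hn]
      by_cases hnS : n ∈ S
      · obtain ⟨i, hi⟩ := hsurj n hnS
        rw [Finset.sum_eq_single i]
        · rw [Pi.smul_apply, tetris_iter, smul_eq_mul, hi, phi]
          show _ = sg (k - f (S.orderEmbOfFin hm i)) * sh (k - f (S.orderEmbOfFin hm i)) (P n z)
          rw [hi]
        · intro b _ hb
          rw [Pi.smul_apply, tetris_iter]
          have : P (S.orderEmbOfFin hm b) z = 0 := by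
            by_contra hc
            exact hb ((S.orderEmbOfFin hm).injective ((hP.own hc hn).trans hi.symm))
          rw [this, sh_of_zero, smul_zero]
        · intro h; exact absurd (Finset.mem_univ _) h
      · have h0 : f n = 0 := by
          by_contra hc
          exact hnS ((hS n).2 hc)
        rw [h0, phi_zero ((hP.1 n).2.1 z)]
        symm
        refine Finset.sum_eq_zero fun i _ => ?_
        rw [Pi.smul_apply, tetris_iter]
        have : P (S.orderEmbOfFin hm i) z = 0 := by
          by_contra hc
          have h1 := hmem i
          rw [hP.own hc hn] at h1
          exact h1 h0
        rw [this, sh_of_zero, smul_zero]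
    · push Not at hh
      rw [img_none _ hh]
      symm
      refine Finset.sum_eq_zero fun i _ => ?_
      rw [Pi.smul_apply, tetris_iter, hh, sh_of_zero, smul_zero]

/-- Key pointwise estimate. -/
lemma key_est {a j δ d : ℕ} {v e : ℤ} (ha : a ≤ k) (hv : |v| ≤ k) (he : e = 1 ∨ e = -1)
    (hd : (e = sg j ∧ d = j + δ) ∨ (e = - sg j ∧ δ = 0 ∧ d = j + 1) ∨
      (e = - sg j ∧ δ = 1 ∧ d = j)) :
    |e * sh j (phi k (a - δ) v) - phi k (a - d) v| ≤ 1 := by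
  rw [phi_sub δ ha hv, phi_sub d ha hv, sh_sign (sg_cases _), sh_sh]
  rcases hd with ⟨h1, h2⟩ | ⟨h1, h2, h3⟩ | ⟨h1, h2, h3⟩
  · have : e * (sg (k - a + δ) * sh (k - a + δ + j) v) = sg (k - a + d) * sh (k - a + d) v := by
      subst h1 h2
      rw [show k - a + (j + δ) = k - a + δ + j by omega, sg_add (k - a + δ) j]
      ring
    rw [this]; simp
  · subst h1 h2 h3
    have : -sg j * (sg (k - a + 0) * sh (k - a + 0 + j) v) -
        sg (k - a + (j + 1)) * sh (k - a + (j + 1)) v =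
        -(sg j * sg (k - a)) * (sh (k - a + j) v - sh (k - a + j + 1) v) := by
      simp only [Nat.add_zero, ← Nat.add_assoc, sg_succ, sg_add]
      ring
    rw [this]
    have h := sh_succ_diff (k - a + j) v
    rcases sg_cases j with h1 | h1 <;> rcases sg_cases (k - a) with h2 | h2 <;>
      simp only [h1, h2] <;> rw [abs_le] at * <;> constructor <;> linarith [h.1, h.2]
  · subst h1 h2 h3
    have : -sg d * (sg (k - a + 1) * sh (k - a + 1 + d) v) -
        sg (k - a + d) * sh (k - a + d) v =
        -(sg d * sg (k - a)) * (sh (k - a + d) v - sh (k - a + d + 1) v) := by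
      rw [show k - a + 1 + d = k - a + d + 1 by omega]
      simp only [sg_succ, sg_add]
      ring
    rw [this]
    have h := sh_succ_diff (k - a + d) v
    rcases sg_cases d with h1 | h1 <;> rcases sg_cases (k - a) with h2 | h2 <;>
      simp only [h1, h2] <;> rw [abs_le] at * <;> constructor <;> linarith [h.1, h.2]

lemma uopen_of_local {α : Type*} {U : Ultrafilter α} {O : Set (ℕ → α)}
    (h : ∀ x ∈ O, ∃ n, ∀ y : ℕ → α, (∀ i < n, y i = x i) → y ∈ O) : UOpen U O := by
  intro x hx
  obtain ⟨n, hn⟩ := h x hx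
  refine ⟨n, fun _ => Set.univ, fun _ => Filter.univ_mem, ⟨by rw [pre_length], by simp⟩, ?_⟩
  intro y hy
  have h1 := hy.1
  rw [pre_length, pre_eq_iff] at h1
  exact hn y h1

lemma open_local {O : Set (BlockSeq k)} (hO : IsOpen O) :
    ∀ R ∈ O, ∃ n, ∀ R' : BlockSeq k, (∀ i < n, R'.1 i = R.1 i) → R' ∈ O := by
  induction hO with
  | basic s hs =>
    obtain ⟨l, rfl⟩ := hs
    intro R hR
    refine ⟨l.length, fun R' h i => ?_⟩
    rw [h i.1 i.2]
    exact hR i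
  | univ => exact fun R _ => ⟨0, fun _ _ => trivial⟩
  | inter s t _ _ ih1 ih2 =>
    rintro R ⟨h1, h2⟩
    obtain ⟨n, hn⟩ := ih1 R h1
    obtain ⟨m, hm⟩ := ih2 R h2
    exact ⟨max n m, fun R' h => ⟨hn R' fun i hi => h i (lt_of_lt_of_le hi (le_max_left _ _)),
      hm R' fun i hi => h i (lt_of_lt_of_le hi (le_max_right _ _))⟩⟩
  | sUnion S _ ih =>
    rintro R ⟨s, hs, h1⟩
    obtain ⟨n, hn⟩ := ih s hs R h1
    exact ⟨n, fun R' h => ⟨s, hs, hn R' h⟩⟩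

lemma not_cblock_local {x : ℕ → Code} (h : ¬ CBlock k x) :
    ∃ n, ∀ y : ℕ → Code, (∀ i < n, y i = x i) → ¬ CBlock k y := by
  rw [CBlock, not_and_or] at h
  rcases h with h | h
  · push Not at h
    obtain ⟨n, hn⟩ := h
    refine ⟨n + 1, fun y hy hc => hn ?_⟩
    rw [← hy n (Nat.lt_succ_self n)]
    exact hc.1 n
  · push Not at h
    obtain ⟨m, n, hmn, i, j, h1, h2, h3⟩ := h
    refine ⟨n + 1, fun y hy hc => ?_⟩
    have := hc.2 m n hmn i j (by rw [hy m (by omega)]; exact h1) (by rw [hy n (by omega)]; exact h2)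
    omega

open Classical in
/-- The block sequence coded by `x`. -/
noncomputable def emb (hk : 1 ≤ k) (P : BlockSeq k) (x : ℕ → Code) : BlockSeq k :=
  if h : CBlock k x then ⟨fun m => img k P.1 (x m), img_block hk P.2 h⟩ else P

lemma emb_val (hk : 1 ≤ k) (P : BlockSeq k) {x : ℕ → Code} (h : CBlock k x) :
    (emb hk P x).1 = fun m => img k P.1 (x m) := by
  have : emb hk P x = ⟨fun m => img k P.1 (x m), img_block hk P.2 h⟩ := dif_pos h
  rw [this]

lemma uramsey_emb {U : Ultrafilter Code} (hk : 1 ≤ k) (P : BlockSeq k) {O : Set (BlockSeq k)}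
    (hO : IsOpen O) : URamsey U (emb hk P ⁻¹' O) := by
  have hV : URamsey U {x : ℕ → Code | CBlock k x}ᶜ := by
    apply UOpen.uramsey
    apply uopen_of_local
    intro x hx
    exact not_cblock_local hx
  let W : Set (ℕ → Code) := {x | ∃ n, ∀ y, CBlock k y → (∀ i < n, y i = x i) → emb hk P y ∈ O}
  have hW : URamsey U W := by
    apply UOpen.uramsey
    apply uopen_of_local
    rintro x ⟨n, hn⟩
    refine ⟨n, fun y hy => ⟨n, fun w hw hwy => hn w hw fun i hi => ?_⟩⟩
    rw [hwy i hi, hy i hi]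
  have hVW : ∀ x, CBlock k x → (emb hk P x ∈ O ↔ x ∈ W) := by
    intro x hx
    constructor
    · intro h
      obtain ⟨n, hn⟩ := open_local hO _ h
      refine ⟨n, fun y hy hyx => hn _ fun i hi => ?_⟩
      rw [emb_val hk P hy, emb_val hk P hx]
      simp only [hyx i hi]
    · rintro ⟨n, hn⟩
      exact hn x hx fun _ _ => rfl
  have hn : ∀ x, ¬ CBlock k x → emb hk P x = P := fun x hx => dif_neg hx
  by_cases hP : P ∈ O
  · have : emb hk P ⁻¹' O = {x : ℕ → Code | CBlock k x}ᶜ ∪ W := by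
      ext x
      by_cases hx : CBlock k x
      · simp only [Set.mem_preimage, hVW x hx, Set.mem_union, Set.mem_compl_iff]
        constructor
        · exact Or.inr
        · rintro (h | h)
          · exact absurd hx h
          · exact h
      · simp only [Set.mem_preimage, hn x hx, hP, true_iff]
        exact Or.inl hx
    rw [this]
    exact hV.union hW
  · have : emb hk P ⁻¹' O = {x : ℕ → Code | CBlock k x}ᶜᶜ ∩ W := by
      rw [compl_compl]
      ext x
      by_cases hx : CBlock k x
      · simp only [Set.mem_preimage, hVW x hx]
        exact ⟨fun h => ⟨hx, h⟩, fun h => h.2⟩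
      · simp only [Set.mem_preimage, hn x hx, hP, false_iff]
        exact fun h => hx h.1
    rw [this]
    exact hV.compl.inter hW

lemma uramsey_souslin {U : Ultrafilter Code} (hk : 1 ≤ k) (P : BlockSeq k) {B : Set (BlockSeq k)}
    (hB : SouslinMeasurable B) : URamsey U (emb hk P ⁻¹' B) := by
  refine hB {B | URamsey U (emb hk P ⁻¹' B)} (fun O hO => uramsey_emb hk P hO)
    (fun B h => ?_) (fun B h C h' => ?_) (fun F h => ?_)
  · exact URamsey.compl h
  · exact URamsey.union h h'
  · have := URamsey.souslin (U := U) (F := fun s => emb hk P ⁻¹' (F s)) h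
    have e : emb hk P ⁻¹' (SouslinOp F) = SouslinOp (fun s => emb hk P ⁻¹' (F s)) := by
      simp only [SouslinOp, Set.preimage_iUnion, Set.preimage_iInter]
    show URamsey U _
    rw [e]
    exact this

lemma exists_color {U : Ultrafilter Code} (hk : 1 ≤ k) (P : BlockSeq k) {r : ℕ}
    (c : BlockSeq k → Fin r) (hc : ∀ i : Fin r, SouslinMeasurable (c ⁻¹' {i})) :
    ∃ (i : Fin r) (A : List Code → Set Code), Lg U A ∧ ∀ x ∈ Box [] A, c (emb hk P x) = i := by
  choose A hA h using fun i => uramsey_souslin (U := U) hk P (hc i) []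
  have hL : Lg U (fun t => ⋂ i, A i t) := fun t => (Filter.iInter_mem).2 fun i => hA i t
  obtain ⟨x, hx⟩ := exists_branch (fun t => ⋂ i, A i t) fun t => Ultrafilter.nonempty_of_mem (hL t)
  refine ⟨c (emb hk P x), A (c (emb hk P x)), hA _, ?_⟩
  have hxA : x ∈ Box [] (A (c (emb hk P x))) :=
    ⟨by simp [pre_zero], fun n _ => Set.mem_iInter.1 (hx n) _⟩
  rcases h (c (emb hk P x)) with h1 | h1
  · exact fun y hy => h1 hy
  · exact absurd rfl (h1 hxA)

/-- Combine consecutive pairs. -/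
def dbl (q : ℕ → Code) (n : ℕ) : Code := q (2 * n) * low 1 (q (2 * n + 1))

lemma dbl_apply (q : ℕ → Code) (n i : ℕ) :
    dbl q n i = max (q (2 * n) i) (q (2 * n + 1) i - 1) := rfl

lemma dbl_ne {q : ℕ → Code} {n i : ℕ} (h : dbl q n i ≠ 0) : ∃ l, l / 2 = n ∧ q l i ≠ 0 := by
  rw [dbl_apply] at h
  by_cases h1 : q (2 * n) i = 0
  · exact ⟨2 * n + 1, by omega, by omega⟩
  · exact ⟨2 * n, by omega, h1⟩

lemma dbl_block {q : ℕ → Code} (hq : CBlock k q) : CBlock k (dbl q) := by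
  refine ⟨fun n => ⟨?_, ?_, ?_⟩, ?_⟩
  · obtain ⟨M, hM⟩ := (hq.1 (2 * n)).1
    obtain ⟨M', hM'⟩ := (hq.1 (2 * n + 1)).1
    refine ⟨max M M', fun i hi => ?_⟩
    rw [dbl_apply, hM i (by omega), hM' i (by omega)]
    rfl
  · intro i
    have h1 := (hq.1 (2 * n)).2.1 i
    have h2 := (hq.1 (2 * n + 1)).2.1 i
    rw [dbl_apply]
    omega
  · obtain ⟨i, hi⟩ := (hq.1 (2 * n)).2.2
    have h2 := (hq.1 (2 * n + 1)).2.1 i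
    exact ⟨i, by rw [dbl_apply]; omega⟩
  · intro m n hmn i j hi hj
    obtain ⟨l, h1, h2⟩ := dbl_ne hi
    obtain ⟨l', h1', h2'⟩ := dbl_ne hj
    exact hq.2 l l' (by omega) i j h2 h2'

lemma dbl_of {q : ℕ → Code} (hq : CBlock k q) {l i : ℕ} (h : q l i ≠ 0) :
    dbl q (l / 2) i = q l i - l % 2 := by
  rw [dbl_apply]
  rcases Nat.mod_two_eq_zero_or_one l with h0 | h0
  · have e : 2 * (l / 2) = l := by omega
    have : q (l + 1) i = 0 := by
      by_contra hc
      have := hq.own h hc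
      omega
    rw [e, this, h0]
    omega
  · have e : 2 * (l / 2) + 1 = l := by omega
    have : q (2 * (l / 2)) i = 0 := by
      by_contra hc
      have := hq.own h hc
      omega
    rw [e, this, h0]
    omega

/-- The shift used at `q l` when `y (l/2)` is shifted by `j` and has sign `e`. -/
def shiftd (e : ℤ) (j l : ℕ) : ℕ :=
  if e = sg j then j + l % 2 else if l % 2 = 0 then j + 1 else j

lemma shiftd_spec {e : ℤ} (he : e = 1 ∨ e = -1) (j l : ℕ) :
    (e = sg j ∧ shiftd e j l = j + l % 2) ∨ (e = - sg j ∧ l % 2 = 0 ∧ shiftd e j l = j + 1) ∨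
      (e = - sg j ∧ l % 2 = 1 ∧ shiftd e j l = j) := by
  unfold shiftd
  have := sg_cases j
  split_ifs with h1 h2
  · exact Or.inl ⟨h1, rfl⟩
  · exact Or.inr (Or.inl ⟨by omega, h2, rfl⟩)
  · exact Or.inr (Or.inr ⟨by omega, by omega, rfl⟩)

lemma shiftd_ge {e : ℤ} (he : e = 1 ∨ e = -1) (j l : ℕ) : j ≤ shiftd e j l := by
  unfold shiftd
  split_ifs <;> omega

lemma shiftd_zero {e : ℤ} (he : e = 1 ∨ e = -1) (n : ℕ) : ∃ l, l / 2 = n ∧ shiftd e 0 l = 0 := by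
  by_cases h : e = sg 0
  · exact ⟨2 * n, by omega, by unfold shiftd; rw [if_pos h]; omega⟩
  · exact ⟨2 * n + 1, by omega, by unfold shiftd; rw [if_neg h, if_neg (by omega)]⟩

end Final

theorem gowers_infinite_dimensional_relativized (k r : ℕ) (hk : 1 ≤ k) (hr : 1 ≤ r)
    (P : BlockSeq k) (c : BlockSeq k → Fin r)
    (hc : ∀ i : Fin r, SouslinMeasurable (c ⁻¹' {i})) :
    ∃ (i : Fin r) (Q : BlockSeq k), (∀ n, InSpanPM k P.1 (Q.1 n)) ∧
      ∀ R : BlockSeq k, (∀ n, InSpanPM k Q.1 (R.1 n)) →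
        ∃ R' : BlockSeq k, c R' = i ∧ ∀ n, normLe (R.1 n - R'.1 n) 1 := by
  obtain ⟨U, hUk, hU⟩ := exists_gowers_uf k
  obtain ⟨i, A, hA, hcol⟩ := exists_color (U := U) hk P c hc
  obtain ⟨q, hq, hmain⟩ := exists_q_main hUk hU hk hA
  have hy := dbl_block hq
  let Q : BlockSeq k := ⟨fun m => img k P.1 (dbl q m), img_block hk P.2 hy⟩
  have hQv : ∀ n z, Q.1 n z = img k P.1 (dbl q n) z := fun _ _ => rfl
  refine ⟨i, Q, fun n => img_span hk P.2 (hy.1 n), fun R hR => ?_⟩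
  choose g' E hg' hE hgE using fun m => span_elim (fun n z => (Q.2.1 n).2.1 z) (hR m)
  let g : ℕ → Code := fun m l => k - shiftd (E m (l / 2)) (k - g' m (l / 2)) l
  have hgdef : ∀ m l, g m l = k - shiftd (E m (l / 2)) (k - g' m (l / 2)) l := fun _ _ => rfl
  have hgne : ∀ m l, g m l ≠ 0 → g' m (l / 2) ≠ 0 := by
    intro m l h h0
    have := shiftd_ge (hE m (l / 2)) (k - g' m (l / 2)) l
    rw [hgdef] at h
    omega
  -- a canonical point for each index
  have hpt : ∀ n, ∃ z, |Q.1 n z| = k ∧ ∀ m, g' m n ≠ 0 → R.1 m z ≠ 0 := by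
    intro n
    obtain ⟨z, hz⟩ := (Q.2.1 n).2.2
    have hz0 : Q.1 n z ≠ 0 := by
      intro h0
      rw [h0] at hz
      simp at hz
      omega
    refine ⟨z, hz, fun m hm => ?_⟩
    rw [hgE m n z (fun n' hn' => by
      by_contra hne
      exact hn' (Q.2.own hne hz0))]
    have : sh (k - g' m n) (Q.1 n z) ≠ 0 := by
      apply sh_ne
      rw [hz]
      omega
    rcases hE m n with h | h <;> simp [h, this]
  have hgB : CBlock k g := by
    refine ⟨fun m => ⟨?_, fun l => ?_, ?_⟩, ?_⟩
    · obtain ⟨M, hM⟩ := (hg' m).1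
      refine ⟨2 * M, fun l hl => ?_⟩
      by_contra hne
      exact hgne m l hne (hM _ (by omega))
    · rw [hgdef]; omega
    · obtain ⟨n, hn⟩ := (hg' m).2.2
      obtain ⟨l, h1, h2⟩ := shiftd_zero (hE m n) n
      refine ⟨l, ?_⟩
      rw [hgdef, h1, hn, Nat.sub_self, h2, Nat.sub_zero]
    · intro m m' hmm l l' hl hl'
      have h1 := hgne m l hl
      have h2 := hgne m' l' hl'
      obtain ⟨z, hz, hzR⟩ := hpt (l / 2)
      obtain ⟨z', hz', hzR'⟩ := hpt (l' / 2)
      have hlt : z < z' := R.2.2 m m' hmm z z' (hzR m h1) (hzR' m' h2)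
      have hz0 : Q.1 (l / 2) z ≠ 0 := by
        intro h0
        rw [h0] at hz
        simp at hz
        omega
      have hz0' : Q.1 (l' / 2) z' ≠ 0 := by
        intro h0
        rw [h0] at hz'
        simp at hz'
        omega
      rcases lt_trichotomy (l / 2) (l' / 2) with h | h | h
      · omega
      · exact absurd (R.2.2 m m' hmm z z (hzR m h1) (hzR m' (by rw [h]; exact h2))) (lt_irrefl _)
      · have := Q.2.2 _ _ h z' z hz0' hz0
        omega
  obtain ⟨x, hxA, hx, hx1, hx2⟩ := hmain g hgB
  refine ⟨emb hk P x, hcol x hxA, fun m z => ?_⟩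
  rw [emb_val hk P hx]
  show |R.1 m z - img k P.1 (x m) z| ≤ ((1 : ℕ) : ℤ)
  by_cases hown : ∃ n, P.1 n z ≠ 0
  · obtain ⟨n, hn⟩ := hown
    have hv := (P.2.1 n).2.1 z
    rw [img_of P.2 _ hn]
    by_cases hl : ∃ l, q l n ≠ 0
    · obtain ⟨l, hl⟩ := hl
      have hqk := (hq.1 l).2.1 n
      have hother : ∀ n', n' ≠ l / 2 → Q.1 n' z = 0 := by
        intro n' hn'
        rw [hQv, img_of P.2 _ hn]
        have : dbl q n' n = 0 := by
          by_contra hne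
          obtain ⟨l', h1, h2⟩ := dbl_ne hne
          rw [hq.own h2 hl] at h1
          exact hn' h1.symm
        rw [this, phi_zero hv]
      rw [hgE m (l / 2) z hother, hQv, img_of P.2 _ hn, dbl_of hq hl, hx1 m l n hl, hgdef]
      have e : q l n - (k - (k - shiftd (E m (l / 2)) (k - g' m (l / 2)) l)) =
          q l n - shiftd (E m (l / 2)) (k - g' m (l / 2)) l := by omega
      rw [e]
      exact key_est hqk hv (hE m _) (shiftd_spec (hE m _) _ _)
    · push Not at hl
      rw [hx2 m n hl, phi_zero hv]
      have hQ0 : ∀ n', Q.1 n' z = 0 := by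
        intro n'
        rw [hQv, img_of P.2 _ hn, dbl_apply, hl, hl]
        exact phi_zero hv
      rw [hgE m 0 z (fun n' _ => hQ0 n'), hQ0, sh_of_zero]
      simp
  · push Not at hown
    rw [img_none _ hown, hgE m 0 z (fun n' _ => img_none _ hown), hQv, img_none _ hown, sh_of_zero]
    simp
end

section
/- (Diagonalized version.) For every k, r ∈ ℕ with k, r ≥ 1 and every colouring c : ⋃_{j=1}^{k} FIN_{±j}^[∞] → {0, …, r−1} that is Souslin measurable with respect to the disjoint union topology (each FIN_{±j}^[∞] carrying its metrizable topology), there exist i₁, …, i_k < r and an infinite block sequence P ∈ FIN_{±k}^[∞] such that for each j = 1, …, k, ⟨T^{(k−j)}(P)⟩_{±j}^[∞] ⊆ (c⁻¹{i_j})₁. -/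
open Function Set

open Function Set
namespace GD

/-! ### Ultra-Ramsey theory -/

/-- Initial segment of length `n`. -/
def res {α : Type*} (x : ℕ → α) (n : ℕ) : List α := (List.range n).map x

theorem res_succ {α : Type*} (x : ℕ → α) (n : ℕ) : res x (n + 1) = res x n ++ [x n] := by
  simp [res, List.range_succ]

theorem res_length {α : Type*} (x : ℕ → α) (n : ℕ) : (res x n).length = n := by simp [res]

theorem res_zero {α : Type*} (x : ℕ → α) : res x 0 = [] := by simp [res]

theorem res_take {α : Type*} (x : ℕ → α) (m n : ℕ) (h : m ≤ n) :
    (res x n).take m = res x m := by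
  simp [res, ← List.map_take, List.take_range, h]

theorem res_get {α : Type*} (x : ℕ → α) (m n : ℕ) (h : m < n) :
    (res x n)[m]? = some (x m) := by
  simp [res, h]

theorem ofFn_eq_res {α : Type*} (x : ℕ → α) (n : ℕ) :
    (List.ofFn fun i : Fin n => x i.1) = res x n := by
  apply List.ext_getElem <;> simp [res]

theorem mem_res {α : Type*} (x : ℕ → α) (m n : ℕ) (h : m < n) : x m ∈ res x n := by
  simp only [res, List.mem_map, List.mem_range]
  exact ⟨m, h, rfl⟩

theorem mem_res_iff {α : Type*} (x : ℕ → α) (n : ℕ) (q : α) :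
    q ∈ res x n ↔ ∃ m < n, x m = q := by
  simp [res]

/-- Branches through the tree with stem `s` and successor sets `B`. -/
def br {α : Type*} (s : List α) (B : List α → Set α) : Set (ℕ → α) :=
  {x | res x s.length = s ∧ ∀ n, s.length ≤ n → x n ∈ B (res x n)}

/-- The stem `s` accepts `A`. -/
def Acc {α : Type*} (𝒰 : Ultrafilter α) (s : List α) (A : Set (ℕ → α)) : Prop :=
  ∃ B : List α → Set α, (∀ t, B t ∈ 𝒰) ∧ br s B ⊆ A

/-- Sequence with stem `s` built by the strategy `g`. -/
def mkBr {α : Type*} (s : List α) (g : List α → α) : ℕ → α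
  | n => if h : n < s.length then s[n] else g (List.ofFn fun i : Fin n => mkBr s g i.1)
termination_by n => n
decreasing_by exact i.2

theorem mkBr_lt {α : Type*} (s : List α) (g : List α → α) (n : ℕ) (h : n < s.length) :
    mkBr s g n = s[n] := by
  rw [mkBr, dif_pos h]

theorem mkBr_ge {α : Type*} (s : List α) (g : List α → α) (n : ℕ) (h : s.length ≤ n) :
    mkBr s g n = g (res (mkBr s g) n) := by
  rw [mkBr, dif_neg (by omega), ofFn_eq_res]

theorem br_nonempty {α : Type*} (𝒰 : Ultrafilter α) (s : List α) (B : List α → Set α)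
    (hB : ∀ t, B t ∈ 𝒰) : (br s B).Nonempty := by
  have h : ∀ t, ∃ p, p ∈ B t := fun t => 𝒰.nonempty_of_mem (hB t)
  choose g hg using h
  refine ⟨mkBr s g, ?_, ?_⟩
  · apply List.ext_getElem
    · simp [res]
    · intro i h1 h2
      simp [res, mkBr_lt s g i h2]
  · intro n hn
    rw [mkBr_ge s g n hn]
    exact hg _

theorem Acc.mono {α : Type*} {𝒰 : Ultrafilter α} {s : List α} {A A' : Set (ℕ → α)}
    (h : Acc 𝒰 s A) (hA : A ⊆ A') : Acc 𝒰 s A' := by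
  obtain ⟨B, h1, h2⟩ := h
  exact ⟨B, h1, h2.trans hA⟩

theorem Acc.inter {α : Type*} {𝒰 : Ultrafilter α} {s : List α} {A A' : Set (ℕ → α)}
    (h : Acc 𝒰 s A) (h' : Acc 𝒰 s A') : Acc 𝒰 s (A ∩ A') := by
  obtain ⟨B, h1, h2⟩ := h
  obtain ⟨B', h1', h2'⟩ := h'
  refine ⟨fun t => B t ∩ B' t, fun t => Filter.inter_mem (h1 t) (h1' t), fun x hx => ⟨?_, ?_⟩⟩
  · exact h2 ⟨hx.1, fun n hn => (hx.2 n hn).1⟩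
  · exact h2' ⟨hx.1, fun n hn => (hx.2 n hn).2⟩

theorem Acc.nonempty {α : Type*} {𝒰 : Ultrafilter α} {s : List α} {A : Set (ℕ → α)}
    (h : Acc 𝒰 s A) : A.Nonempty := by
  obtain ⟨B, h1, h2⟩ := h
  exact (br_nonempty 𝒰 s B h1).mono h2

theorem Acc.step {α : Type*} {𝒰 : Ultrafilter α} {s : List α} {A : Set (ℕ → α)}
    (h : {p | Acc 𝒰 (s ++ [p]) A} ∈ 𝒰) : Acc 𝒰 s A := by
  classical
  have h1 : ∀ p, ∃ B : List α → Set α, (∀ t, B t ∈ 𝒰) ∧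
      (Acc 𝒰 (s ++ [p]) A → br (s ++ [p]) B ⊆ A) := by
    intro p
    by_cases hp : Acc 𝒰 (s ++ [p]) A
    · obtain ⟨B, h1, h2⟩ := hp
      exact ⟨B, h1, fun _ => h2⟩
    · exact ⟨fun _ => univ, fun _ => Filter.univ_mem, fun h => absurd h hp⟩
  choose C hC hC' using h1
  refine ⟨fun t => match t[s.length]? with
    | none => {p | Acc 𝒰 (s ++ [p]) A}
    | some p => C p t, ?_, ?_⟩
  · intro t
    cases hq : t[s.length]? with
    | none => simpa [hq] using h
    | some p => simpa [hq] using hC p t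
  · rintro x ⟨hx1, hx2⟩
    have h3 := hx2 s.length le_rfl
    rw [hx1] at h3
    have h4 : Acc 𝒰 (s ++ [x s.length]) A := by simpa using h3
    refine hC' _ h4 ⟨?_, ?_⟩
    · simp [res_succ, hx1]
    · intro n hn
      have hn' : s.length < n := by simpa using hn
      have h5 := hx2 n hn'.le
      beta_reduce at h5
      rw [res_get x _ _ hn'] at h5
      exact h5

theorem Acc.iInter_nat {α : Type*} {𝒰 : Ultrafilter α} {A : ℕ → Set (ℕ → α)}
    (h : ∀ n s, Acc 𝒰 s (A n)) (s : List α) : Acc 𝒰 s (⋂ n, A n) := by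
  choose C hC hC' using h
  refine ⟨fun t => ⋂ n ∈ Finset.range (t.length + 1), ⋂ m ∈ Finset.range (t.length + 1),
    C n (t.take m) t, ?_, ?_⟩
  · intro t
    refine (Filter.biInter_finset_mem _).2 fun n _ => (Filter.biInter_finset_mem _).2 fun m _ => ?_
    exact hC _ _ _
  · rintro x ⟨hx1, hx2⟩
    refine mem_iInter.2 fun n => ?_
    set m := max n s.length with hm
    refine hC' n (res x m) ⟨?_, ?_⟩
    · rw [res_length]
    · intro l hl
      rw [res_length] at hl
      have h1 := hx2 l ((le_max_right _ _).trans hl)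
      simp only [mem_iInter, Finset.mem_range, res_length] at h1
      have h2 := h1 n (by have := le_max_left n s.length; omega) m (by omega)
      rwa [res_take x m l hl] at h2

theorem Acc.iInter {α ι : Type*} [Countable ι] [Nonempty ι] {𝒰 : Ultrafilter α}
    {A : ι → Set (ℕ → α)}
    (h : ∀ n s, Acc 𝒰 s (A n)) (s : List α) : Acc 𝒰 s (⋂ n, A n) := by
  obtain ⟨f, hf⟩ := exists_surjective_nat ι
  refine (Acc.iInter_nat (A := fun n => A (f n)) (fun n s => h _ s) s).mono ?_
  intro x hx
  refine mem_iInter.2 fun i => ?_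
  obtain ⟨n, rfl⟩ := hf i
  exact mem_iInter.1 hx n

/-- Open sets for the ultrafilter topology. -/
def Uopen {α : Type*} (𝒰 : Ultrafilter α) (G : Set (ℕ → α)) : Prop :=
  ∀ x ∈ G, ∀ m, ∃ n, m ≤ n ∧ Acc 𝒰 (res x n) G

/-- Ramsey sets. -/
def Ram {α : Type*} (𝒰 : Ultrafilter α) (A : Set (ℕ → α)) : Prop :=
  ∀ s, Acc 𝒰 s A ∨ Acc 𝒰 s Aᶜ

theorem Uopen.ram {α : Type*} {𝒰 : Ultrafilter α} {G : Set (ℕ → α)} (h : Uopen 𝒰 G) :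
    Ram 𝒰 G := by
  classical
  intro s
  by_cases hs : Acc 𝒰 s G
  · exact Or.inl hs
  right
  refine ⟨fun t => if Acc 𝒰 t G then univ else {p | ¬ Acc 𝒰 (t ++ [p]) G}, ?_, ?_⟩
  · intro t
    beta_reduce
    split_ifs with ht
    · exact Filter.univ_mem
    · by_contra hc
      exact ht (Acc.step (by
        have := Ultrafilter.compl_mem_iff_notMem.2 hc
        simpa [compl_def] using this))
  · rintro x ⟨hx1, hx2⟩ hxG
    have key : ∀ n, s.length ≤ n → ¬ Acc 𝒰 (res x n) G := by
      intro n hn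
      induction n, hn using Nat.le_induction with
      | base => rwa [hx1]
      | succ n hn ih =>
        have := hx2 n hn
        beta_reduce at this
        rw [if_neg ih] at this
        rw [res_succ]
        exact this
    obtain ⟨n, hn, hn'⟩ := h x hxG s.length
    exact key n hn hn'

theorem exists_kernel {α : Type*} (𝒰 : Ultrafilter α) (A : Set (ℕ → α)) :
    ∃ G, G ⊆ A ∧ Uopen 𝒰 G ∧ ∀ s, Acc 𝒰 s A → Acc 𝒰 s G := by
  have h1 : ∀ s : List α, ∃ B : List α → Set α, (∀ t, B t ∈ 𝒰) ∧
      (Acc 𝒰 s A → br s B ⊆ A) := by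
    intro s
    by_cases hp : Acc 𝒰 s A
    · obtain ⟨B, h1, h2⟩ := hp
      exact ⟨B, h1, fun _ => h2⟩
    · exact ⟨fun _ => univ, fun _ => Filter.univ_mem, fun h => absurd h hp⟩
  choose C hC hC' using h1
  have hsub : ∀ s, Acc 𝒰 s A → br s (C s) ⊆ {x | ∃ s, Acc 𝒰 s A ∧ x ∈ br s (C s)} :=
    fun s hs x hx => ⟨s, hs, hx⟩
  refine ⟨{x | ∃ s, Acc 𝒰 s A ∧ x ∈ br s (C s)}, ?_, ?_, ?_⟩
  · rintro x ⟨s, hs, hx⟩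
    exact hC' s hs hx
  · rintro x ⟨s, hs, hx⟩ m
    refine ⟨max m s.length, le_max_left _ _, C s, hC s, ?_⟩
    refine Subset.trans ?_ (hsub s hs)
    rintro y ⟨hy1, hy2⟩
    rw [res_length] at hy1 hy2
    have hle : s.length ≤ max m s.length := le_max_right _ _
    refine ⟨?_, ?_⟩
    · rw [← res_take y _ _ hle, hy1, res_take x _ _ hle, hx.1]
    · intro n hn
      rcases le_total (max m s.length) n with h2 | h2
      · exact hy2 n h2
      · rcases h2.eq_or_lt with h3 | h3
        · exact hy2 n h3.ge
        have e1 : res y n = res x n := by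
          rw [← res_take y _ _ h2, hy1, res_take x _ _ h2]
        have e2 : y n = x n := by
          have := res_get y n _ h3
          rw [hy1, res_get x n _ h3] at this
          exact (Option.some.inj this).symm
        rw [e1, e2]
        exact hx.2 n hn
  · intro s hs
    exact ⟨C s, hC s, hsub s hs⟩

theorem Ram.compl {α : Type*} {𝒰 : Ultrafilter α} {A : Set (ℕ → α)} (h : Ram 𝒰 A) :
    Ram 𝒰 Aᶜ := by
  intro s
  rw [compl_compl]
  exact (h s).symm

theorem Ram.union {α : Type*} {𝒰 : Ultrafilter α} {A A' : Set (ℕ → α)} (h : Ram 𝒰 A)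
    (h' : Ram 𝒰 A') : Ram 𝒰 (A ∪ A') := by
  intro s
  rcases h s with h1 | h1
  · exact Or.inl (h1.mono subset_union_left)
  rcases h' s with h2 | h2
  · exact Or.inl (h2.mono subset_union_right)
  · right
    rw [compl_union]
    exact h1.inter h2

theorem Ram.inter {α : Type*} {𝒰 : Ultrafilter α} {A A' : Set (ℕ → α)} (h : Ram 𝒰 A)
    (h' : Ram 𝒰 A') : Ram 𝒰 (A ∩ A') := by
  have := (h.compl.union h'.compl).compl
  rwa [compl_union, compl_compl, compl_compl] at this

theorem Ram.iUnion {α : Type*} {𝒰 : Ultrafilter α} {A : ℕ → Set (ℕ → α)}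
    (h : ∀ n, Ram 𝒰 (A n)) : Ram 𝒰 (⋃ n, A n) := by
  choose G hG1 hG2 hG3 using fun n => exists_kernel 𝒰 (A n)
  have hG : Uopen 𝒰 (⋃ n, G n) := by
    intro x hx m
    obtain ⟨n, hn⟩ := mem_iUnion.1 hx
    obtain ⟨l, hl, hl'⟩ := hG2 n x hn m
    exact ⟨l, hl, hl'.mono (subset_iUnion G n)⟩
  have hN : ∀ n s, Acc 𝒰 s (A n \ G n)ᶜ := by
    intro n s
    rcases h n s with h1 | h1
    · exact (hG3 n s h1).mono fun x hx hx' => hx'.2 hx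
    · exact h1.mono fun x hx hx' => hx hx'.1
  intro s
  rcases hG.ram s with h1 | h1
  · exact Or.inl (h1.mono (iUnion_mono hG1))
  · right
    refine (h1.inter (Acc.iInter hN s)).mono ?_
    rintro x ⟨hx1, hx2⟩ hx
    obtain ⟨n, hn⟩ := mem_iUnion.1 hx
    exact mem_iInter.1 hx2 n ⟨hn, fun h => hx1 (mem_iUnion.2 ⟨n, h⟩)⟩

theorem Ram.souslin {α : Type*} {𝒰 : Ultrafilter α} {F : List ℕ → Set (ℕ → α)}
    (h : ∀ s, Ram 𝒰 (F s)) : Ram 𝒰 (SouslinOp F) := by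
  have hS : ∀ x, x ∈ SouslinOp F ↔ ∃ f : ℕ → ℕ, ∀ n, x ∈ F (res f n) := by
    intro x
    simp only [SouslinOp, mem_iUnion, mem_iInter, ofFn_eq_res]
  set S : List ℕ → Set (ℕ → α) := fun s =>
    {x | ∃ f : ℕ → ℕ, res f s.length = s ∧ ∀ n, x ∈ F (res f n)} with hSdef
  have hS0 : SouslinOp F = S [] := by
    ext x
    rw [hS]
    simp [hSdef, res_zero]
  choose G hG1 hG2 hG3 using fun s => exists_kernel 𝒰 (S s)ᶜ
  set H : List ℕ → Set (ℕ → α) := fun s => (G s)ᶜ ∩ F s with hH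
  have hSH : ∀ s, S s ⊆ H s := by
    rintro s x hx
    refine ⟨fun h => hG1 s h hx, ?_⟩
    obtain ⟨f, hf1, hf2⟩ := hx
    rw [← hf1]
    exact hf2 _
  have hHram : ∀ s, Ram 𝒰 (H s) := fun s => (hG2 s).ram.compl.inter (h s)
  set M : List ℕ → Set (ℕ → α) := fun s => H s ∩ (⋃ n : ℕ, H (s ++ [n]))ᶜ with hM
  have hMram : ∀ s, Ram 𝒰 (M s) := fun s =>
    (hHram s).inter (Ram.iUnion fun n => hHram _).compl
  have hMnull : ∀ s t, Acc 𝒰 t (M s)ᶜ := by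
    intro s t
    rcases hMram s t with h1 | h1
    · exfalso
      have h2 : Acc 𝒰 t (S s)ᶜ := by
        refine h1.mono ?_
        rintro x ⟨_, hx⟩ ⟨f, hf1, hf2⟩
        refine hx (mem_iUnion.2 ⟨f s.length, hSH _ ⟨f, ?_, hf2⟩⟩)
        simp [res_succ, hf1]
      obtain ⟨x, hx1, hx2⟩ := (h1.inter (hG3 s t h2)).nonempty
      exact hx1.1.1 hx2
    · exact h1
  intro t
  rw [hS0]
  rcases hHram [] t with h1 | h1
  · left
    refine (h1.inter (Acc.iInter hMnull t)).mono ?_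
    rintro x ⟨hx1, hx2⟩
    have hstep : ∀ s, ∃ n : ℕ, x ∈ H s → x ∈ H (s ++ [n]) := by
      intro s
      by_cases hs : x ∈ H s
      · have := mem_iInter.1 hx2 s
        by_contra hc
        push Not at hc
        refine this ⟨hs, fun hx => ?_⟩
        obtain ⟨n, hn⟩ := mem_iUnion.1 hx
        exact (hc n).2 hn
      · exact ⟨0, fun h => absurd h hs⟩
    choose g hg using hstep
    refine ⟨mkBr [] g, by simp [res_zero], ?_⟩
    have : ∀ n, x ∈ H (res (mkBr [] g) n) := by
      intro n
      induction n with
      | zero => rwa [res_zero]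
      | succ n ih =>
        rw [res_succ, mkBr_ge [] g n (by simp)]
        exact hg _ ih
    exact fun n => (this n).2
  · right
    exact h1.mono (compl_subset_compl.2 (hSH _))

/-- The states reachable from the initial states `S₀` along the list. -/
def reachL {α S D : Type*} (step : S → D → α → S) (S₀ : Set S) (l : List α) : Set S :=
  l.foldl (fun X p => image2 (fun s d => step s d p) X univ) S₀

theorem reachL_append {α S D : Type*} (step : S → D → α → S) (S₀ : Set S) (l : List α) (p : α) :
    reachL step S₀ (l ++ [p]) = image2 (fun s d => step s d p) (reachL step S₀ l) univ := by
  simp [reachL]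

theorem reachL_finite {α S D : Type*} [Finite D] (step : S → D → α → S) (S₀ : Set S)
    (h : S₀.Finite) (l : List α) : (reachL step S₀ l).Finite := by
  induction l using List.reverseRecOn with
  | nil => simpa [reachL] using h
  | append_singleton l p ih =>
    rw [reachL_append]
    exact ih.image2 _ finite_univ

theorem fusion {α S D : Type*} [Finite D] (𝒰 : Ultrafilter α) (step : S → D → α → S)
    (Good : S → Prop) (S₀ : Set S) (hfin : S₀.Finite) (h0 : ∀ s ∈ S₀, Good s)
    (hstep : ∀ s, Good s → ∀ d, ∀ᶠ p in (𝒰 : Filter α), Good (step s d p))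
    (F : List α → Set α) (hF : ∀ l, F l ∈ 𝒰) :
    ∃ P : ℕ → α, (∀ m, P m ∈ F (res P m)) ∧
      ∀ m, ∀ s ∈ reachL step S₀ (res P m), Good s := by
  obtain ⟨P, _, hP⟩ := br_nonempty 𝒰 []
    (fun t => F t ∩ {p | ∀ s ∈ reachL step S₀ t, ∀ d, Good s → Good (step s d p)}) (by
      intro t
      refine Filter.inter_mem (hF t) ?_
      refine (Filter.eventually_all_finite (reachL_finite step S₀ hfin t)).2 fun s _ => ?_
      refine Filter.eventually_all.2 fun d => ?_
      by_cases hs : Good s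
      · filter_upwards [hstep s hs d] with p hp _ using hp
      · exact Filter.Eventually.of_forall fun p h => absurd h hs)
  refine ⟨P, fun m => (hP m (by simp)).1, fun m => ?_⟩
  induction m with
  | zero => simpa [res_zero, reachL] using h0
  | succ m ih =>
    rw [res_succ, reachL_append]
    rintro _ ⟨s, hs, d, _, rfl⟩
    exact (hP m (by simp)).2 s hs d (ih s hs)

end GD

open Function Set
namespace GD

/-! ### Subsymmetric idempotent ultrafilters -/

attribute [local instance] Ultrafilter.add Ultrafilter.addSemigroup

/-- `-p` for `u`-most `p` is close to any `v`-large set. -/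
def Nr (u v : Ultrafilter (ℕ → ℤ)) : Prop :=
  ∀ A ∈ v, {p : ℕ → ℤ | -p ∈ approx 1 A} ∈ u

theorem isFin_bound {a : ℕ} {p : ℕ → ℤ} (h : IsFin a p) : ∃ M, ∀ n, M ≤ n → p n = 0 := by
  obtain ⟨M, hM⟩ := h.1.bddAbove
  refine ⟨M + 1, fun n hn => ?_⟩
  by_contra hc
  have := hM (show n ∈ support p from hc)
  omega

theorem isFin_add {a b : ℕ} {p q : ℕ → ℤ} (hp : IsFin a p) (hq : IsFin b q) {M : ℕ}
    (h1 : ∀ n, M ≤ n → p n = 0) (h2 : ∀ n < M, q n = 0) : IsFin (max a b) (p + q) := by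
  refine ⟨(hp.1.union hq.1).subset (support_add p q), ?_, ?_⟩
  · intro n
    push_cast
    rcases lt_or_ge n M with h | h
    · simpa [h2 n h] using Or.inl (hp.2.1 n)
    · simpa [h1 n h] using Or.inr (hq.2.1 n)
  · rcases le_total a b with hab | hab
    · obtain ⟨n, hn⟩ := hq.2.2
      rw [max_eq_right hab]
      by_cases h : n < M
      · have hb : (b : ℤ) = 0 := by rw [← hn, h2 n h]; rfl
        have ha : (a : ℤ) = 0 := by omega
        refine ⟨n, ?_⟩
        have := hp.2.1 n
        rw [ha] at this
        have h3 : p n = 0 := abs_eq_zero.1 (le_antisymm this (abs_nonneg _))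
        simp [h3, h2 n h, hb]
      · exact ⟨n, by simpa [h1 n (by omega)] using hn⟩
    · obtain ⟨n, hn⟩ := hp.2.2
      rw [max_eq_left hab]
      by_cases h : n < M
      · exact ⟨n, by simpa [h2 n h] using hn⟩
      · have hb : (a : ℤ) = 0 := by rw [← hn, h1 n (by omega)]; rfl
        have ha : (b : ℤ) = 0 := by omega
        refine ⟨n, ?_⟩
        have := hq.2.1 n
        rw [ha] at this
        have h3 : q n = 0 := abs_eq_zero.1 (le_antisymm this (abs_nonneg _))
        simp [h3, h1 n (by omega), hb]

theorem mem_add {u v : Ultrafilter (ℕ → ℤ)} {A : Set (ℕ → ℤ)} :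
    A ∈ u + v ↔ ∀ᶠ p in (u : Filter (ℕ → ℤ)), ∀ᶠ q in (v : Filter (ℕ → ℤ)), p + q ∈ A :=
  Iff.rfl

theorem cof_add {a b : ℕ} {u v : Ultrafilter (ℕ → ℤ)} (hu : IsCofiniteUF a u)
    (hv : IsCofiniteUF b v) : IsCofiniteUF (max a b) (u + v) := by
  constructor
  · rw [mem_add]
    filter_upwards [hu.1] with p hp
    obtain ⟨M, hM⟩ := isFin_bound hp
    filter_upwards [hv.1, hv.2 M] with q hq hq'
    exact isFin_add hp hq hM hq'
  · intro m
    rw [mem_add]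
    filter_upwards [hu.2 m] with p hp
    filter_upwards [hv.2 m] with q hq n hn
    simp [hp n hn, hq n hn]

theorem nr_add {a b c d : ℕ} {u v u' v' : Ultrafilter (ℕ → ℤ)} (hu : IsCofiniteUF a u)
    (hv : IsCofiniteUF b v) (hu' : IsCofiniteUF c u') (hv' : IsCofiniteUF d v')
    (h : Nr u v) (h' : Nr u' v') : Nr (u + u') (v + v') := by
  intro A hA
  rw [mem_add] at hA
  have h1 := h _ (Filter.inter_mem hA hv.1)
  rw [mem_add]
  filter_upwards [h1, hu.1] with y' hy' hy'f
  obtain ⟨y, ⟨hy1, hy2⟩, hy3⟩ := hy'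
  obtain ⟨M, hM⟩ := isFin_bound hy2
  obtain ⟨M', hM'⟩ := isFin_bound hy'f
  have h2 := h' _ (Filter.inter_mem hy1 (hv'.2 (max M M')))
  filter_upwards [h2, hu'.2 (max M M')] with z' hz' hz'0
  obtain ⟨z, ⟨hz1, hz2⟩, hz3⟩ := hz'
  refine ⟨y + z, hz1, fun n => ?_⟩
  rcases lt_or_ge n (max M M') with hn | hn
  · have e1 := hz'0 n hn
    have e2 := hz2 n hn
    have := hy3 n
    simpa [e1, e2] using this
  · have e1 := hM n ((le_max_left _ _).trans hn)
    have e2 := hM' n ((le_max_right _ _).trans hn)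
    have := hz3 n
    simpa [e1, e2] using this

/-- Scalar tetris. -/
def tz (v : ℤ) : ℤ := if 0 < v then v - 1 else if v < 0 then v + 1 else 0

theorem tetris_apply (p : ℕ → ℤ) (n : ℕ) : tetris p n = tz (p n) := rfl
theorem negT_apply (p : ℕ → ℤ) (n : ℕ) : negT p n = -tz (p n) := rfl
theorem tz_zero : tz 0 = 0 := by simp [tz]

theorem tz_dist (v w : ℤ) (h : |v - w| ≤ 1) : |tz v - tz w| ≤ 1 := by
  rw [abs_le] at *
  unfold tz
  split_ifs <;> omega

theorem tz_abs (v : ℤ) (a : ℕ) (h : |v| ≤ (a + 1 : ℕ)) : |tz v| ≤ (a : ℕ) := by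
  rw [abs_le] at *
  push_cast at *
  unfold tz
  split_ifs <;> omega

theorem tz_abs_eq (v : ℤ) (a : ℕ) (h : |v| = (a + 1 : ℕ)) : |tz v| = (a : ℕ) := by
  rw [abs_eq (by positivity)] at *
  push_cast at *
  unfold tz
  split_ifs <;> omega

theorem tz_neg (v : ℤ) : tz (-v) = - tz v := by
  unfold tz
  split_ifs <;> omega

theorem isFin_negT {a : ℕ} {p : ℕ → ℤ} (hp : IsFin (a + 1) p) : IsFin a (negT p) := by
  refine ⟨hp.1.subset ?_, fun n => ?_, ?_⟩
  · intro n hn hn'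
    apply hn
    rw [negT_apply, hn', tz_zero, neg_zero]
  · rw [negT_apply, abs_neg]
    exact tz_abs _ _ (hp.2.1 n)
  · obtain ⟨n, hn⟩ := hp.2.2
    refine ⟨n, ?_⟩
    rw [negT_apply, abs_neg]
    exact tz_abs_eq _ _ hn

theorem cof_negT {a : ℕ} {u : Ultrafilter (ℕ → ℤ)} (hu : IsCofiniteUF (a + 1) u) :
    IsCofiniteUF a (u.map negT) := by
  constructor
  · rw [Ultrafilter.mem_map]
    filter_upwards [hu.1] with p hp using isFin_negT hp
  · intro m
    rw [Ultrafilter.mem_map]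
    filter_upwards [hu.2 m] with p hp n hn
    rw [negT_apply, hp n hn, tz_zero, neg_zero]

theorem nr_negT {u v : Ultrafilter (ℕ → ℤ)} (h : Nr u v) : Nr (u.map negT) (v.map negT) := by
  intro A hA
  rw [Ultrafilter.mem_map] at *
  filter_upwards [h _ hA] with p hp
  obtain ⟨q, hq, hq'⟩ := hp
  refine ⟨negT q, hq, fun n => ?_⟩
  have := tz_dist _ _ (hq' n)
  simp only [Pi.sub_apply, Pi.neg_apply, negT_apply, neg_neg] at this ⊢
  rw [tz_neg] at this
  push_cast
  rw [abs_le] at *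
  omega

theorem negT_add {p q : ℕ → ℤ} {M : ℕ} (h1 : ∀ n, M ≤ n → p n = 0) (h2 : ∀ n < M, q n = 0) :
    negT (p + q) = negT p + negT q := by
  ext n
  simp only [Pi.add_apply, negT_apply]
  rcases lt_or_ge n M with h | h
  · simp [h2 n h, tz_zero]
  · simp [h1 n h, tz_zero]

theorem map_negT_add {a b : ℕ} {u v : Ultrafilter (ℕ → ℤ)} (hu : IsCofiniteUF a u)
    (hv : IsCofiniteUF b v) : (u + v).map negT = u.map negT + v.map negT := by
  apply Ultrafilter.eq_of_le
  intro A hA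
  have hA' : A ∈ u.map negT + v.map negT := hA
  rw [mem_add] at hA'
  have h1 : ∀ᶠ p in (u : Filter (ℕ → ℤ)), ∀ᶠ q in (v : Filter (ℕ → ℤ)),
    negT p + negT q ∈ A := hA'
  change negT ⁻¹' A ∈ u + v
  rw [mem_add]
  filter_upwards [h1, hu.1] with p hp hpf
  obtain ⟨M, hM⟩ := isFin_bound hpf
  filter_upwards [hp, hv.2 M] with q hq hq'
  change negT (p + q) ∈ A
  rwa [negT_add hM hq']

/-- Subsymmetric cofinite ultrafilters. -/
def SS (a : ℕ) : Set (Ultrafilter (ℕ → ℤ)) := {u | IsCofiniteUF a u ∧ Nr u u}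

theorem SS_add {a b : ℕ} {u v : Ultrafilter (ℕ → ℤ)} (hu : u ∈ SS a) (hv : v ∈ SS b) :
    u + v ∈ SS (max a b) :=
  ⟨cof_add hu.1 hv.1, nr_add hu.1 hu.1 hv.1 hv.1 hu.2 hv.2⟩

theorem SS_negT {a : ℕ} {u : Ultrafilter (ℕ → ℤ)} (hu : u ∈ SS (a + 1)) : u.map negT ∈ SS a :=
  ⟨cof_negT hu.1, nr_negT hu.2⟩

theorem SS_closed (a : ℕ) : IsClosed (SS a) := by
  have : SS a = ({u | {p | IsFin a p} ∈ u} ∩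
      ⋂ m : ℕ, {u | {p : ℕ → ℤ | ∀ n < m, p n = 0} ∈ u}) ∩
      ⋂ A : Set (ℕ → ℤ), ({u | A ∈ u}ᶜ ∪ {u | {p : ℕ → ℤ | -p ∈ approx 1 A} ∈ u}) := by
    ext u
    simp only [SS, IsCofiniteUF, Nr, mem_inter_iff, mem_iInter, mem_union, mem_compl_iff,
      mem_ofPred_eq]
    constructor
    · rintro ⟨h1, h2⟩
      exact ⟨h1, fun A => by by_cases hA : A ∈ u <;> [exact Or.inr (h2 A hA); exact Or.inl hA]⟩
    · rintro ⟨h1, h2⟩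
      exact ⟨h1, fun A hA => (h2 A).resolve_left (fun h => h hA)⟩
  rw [this]
  refine ((ultrafilter_isClosed_basic _).inter
    (isClosed_iInter fun m => ultrafilter_isClosed_basic _)).inter (isClosed_iInter fun A => ?_)
  exact (ultrafilter_isOpen_basic A).isClosed_compl.union (ultrafilter_isClosed_basic _)

theorem continuous_map (f : (ℕ → ℤ) → (ℕ → ℤ)) :
    Continuous (Ultrafilter.map f : Ultrafilter (ℕ → ℤ) → Ultrafilter (ℕ → ℤ)) :=
  ultrafilterBasis_is_basis.continuous_iff.2 <| Set.forall_mem_range.mpr fun s ↦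
    ultrafilter_isOpen_basic (f ⁻¹' s)

theorem SS_zero {u : Ultrafilter (ℕ → ℤ)} (hu : IsCofiniteUF 0 u) : u = pure 0 := by
  symm
  apply Ultrafilter.eq_of_le
  intro A hA
  have h1 : {p | IsFin 0 p} ∩ A ∈ u := Filter.inter_mem hu.1 hA
  obtain ⟨p, hp, hp'⟩ := u.nonempty_of_mem h1
  have : p = 0 := by
    ext n
    have := hp.2.1 n
    exact abs_eq_zero.1 (le_antisymm (by simpa using this) (abs_nonneg _))
  subst this
  exact hp'

theorem pure_zero_add (u : Ultrafilter (ℕ → ℤ)) : pure 0 + u = u := by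
  apply Ultrafilter.eq_of_le
  intro A hA
  change ∀ᶠ q in (u : Filter (ℕ → ℤ)), 0 + q ∈ A
  simpa using hA

theorem add_pure_zero (u : Ultrafilter (ℕ → ℤ)) : u + pure 0 = u := by
  apply Ultrafilter.eq_of_le
  intro A hA
  change ∀ᶠ q in (u : Filter (ℕ → ℤ)), q + 0 ∈ A
  simpa using hA

/-- The ultrafilter of spikes of height `c`. -/
noncomputable def dl (c : ℤ) : Ultrafilter (ℕ → ℤ) :=
  (Filter.hyperfilter ℕ).map fun n => Pi.single n c

theorem dl_cof (c : ℤ) : IsCofiniteUF c.natAbs (dl c) := by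
  constructor
  · refine Filter.univ_mem' (f := (Filter.hyperfilter ℕ : Filter ℕ)) fun n => ?_
    refine ⟨(finite_singleton n).subset ?_, ?_, n, ?_⟩
    · intro m hm
      by_contra hc
      exact hm (by simpa using Pi.single_eq_of_ne (M := fun _ => ℤ) (fun h => hc h) c)
    · intro m
      by_cases h : m = n
      · subst h; simp
      · simp [Pi.single_eq_of_ne h]
    · simp
  · intro m
    have : ∀ᶠ n in (Filter.hyperfilter ℕ : Filter ℕ), m ≤ n :=
      Nat.hyperfilter_le_atTop (Filter.eventually_ge_atTop m)
    change ∀ᶠ n in (Filter.hyperfilter ℕ : Filter ℕ), ∀ i < m, (Pi.single n c : ℕ → ℤ) i = 0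
    filter_upwards [this] with n hn i hi
    exact Pi.single_eq_of_ne (M := fun _ => ℤ) (show i ≠ n by omega) c

theorem dl_nr (c d : ℤ) (h : |c + d| ≤ 1) : Nr (dl c) (dl d) := by
  intro A hA
  have hA' : ∀ᶠ n in (Filter.hyperfilter ℕ : Filter ℕ), (Pi.single n d : ℕ → ℤ) ∈ A := hA
  change ∀ᶠ n in (Filter.hyperfilter ℕ : Filter ℕ), -(Pi.single n c : ℕ → ℤ) ∈ approx 1 A
  filter_upwards [hA'] with n hn
  refine ⟨_, hn, fun m => ?_⟩
  by_cases hm : m = n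
  · subst hm
    rw [abs_le] at *
    simp
    omega
  · simp [Pi.single_eq_of_ne hm]

theorem dl_zero : dl 0 = pure 0 := SS_zero (by simpa using dl_cof 0)

/-- Partial sums of spike ultrafilters. -/
noncomputable def ES (f : ℕ → ℤ) : ℕ → Ultrafilter (ℕ → ℤ)
  | 0 => dl (f 0)
  | n + 1 => ES f n + dl (f (n + 1))

theorem ES_cof (f : ℕ → ℤ) (n : ℕ) : ∃ a, IsCofiniteUF a (ES f n) := by
  induction n with
  | zero => exact ⟨_, dl_cof _⟩
  | succ n ih =>
    obtain ⟨a, ha⟩ := ih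
    exact ⟨_, cof_add ha (dl_cof _)⟩

theorem ES_nr (f g : ℕ → ℤ) (n : ℕ) (h : ∀ i ≤ n, |f i + g i| ≤ 1) : Nr (ES f n) (ES g n) := by
  induction n with
  | zero => exact dl_nr _ _ (h 0 le_rfl)
  | succ n ih =>
    obtain ⟨a, ha⟩ := ES_cof f n
    obtain ⟨b, hb⟩ := ES_cof g n
    exact nr_add ha hb (dl_cof _) (dl_cof _) (ih fun i hi => h i (by omega))
      (dl_nr _ _ (h _ le_rfl))

theorem ES_shift (f : ℕ → ℤ) (n : ℕ) :
    ES f (n + 1) = dl (f 0) + ES (fun i => f (i + 1)) n := by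
  induction n with
  | zero => rfl
  | succ n ih =>
    rw [ES, ih, ES, add_assoc]

theorem ES_level (f : ℕ → ℤ) (K n : ℕ) (h : ∀ i ≤ n, (f i).natAbs ≤ min i K)
    (h' : ∀ i ≤ n, i ≤ K → (f i).natAbs = i) : IsCofiniteUF (min n K) (ES f n) := by
  induction n with
  | zero =>
    have := dl_cof (f 0)
    rw [h' 0 le_rfl (Nat.zero_le _)] at this
    simpa [ES] using this
  | succ n ih =>
    have h1 := cof_add (ih (fun i hi => h i (by omega)) (fun i hi => h' i (by omega)))
      (dl_cof (f (n + 1)))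
    have e : max (min n K) (f (n + 1)).natAbs = min (n + 1) K := by
      have h2 := h (n + 1) le_rfl
      have h3 := h' (n + 1) le_rfl
      by_cases hn : n + 1 ≤ K
      · rw [h3 hn]; omega
      · omega
    rw [e] at h1
    exact h1

theorem SS_nonempty (K : ℕ) : (SS K).Nonempty := by
  rcases Nat.eq_zero_or_pos K with rfl | hK
  · refine ⟨dl 0, by simpa using dl_cof 0, dl_nr 0 0 (by simp)⟩
  obtain ⟨N, hN⟩ : ∃ N, 2 * K = N + 2 := ⟨2 * K - 2, by omega⟩
  set f : ℕ → ℤ := fun i => (-1) ^ i * (min i (2 * K - i) : ℕ) with hf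
  have hab : ∀ i, (f i).natAbs = min i (2 * K - i) := by
    intro i
    simp only [hf, Int.natAbs_mul, Int.natAbs_pow, Int.natAbs_neg, Int.natAbs_one, one_pow,
      one_mul, Int.natAbs_natCast]
  have h0 : f 0 = 0 := by simp [hf]
  have h2 : f (N + 2) = 0 := by
    have := hab (N + 2)
    rw [hN] at this
    omega
  have e1 : ES f (N + 1) = ES (fun i => f (i + 1)) N := by
    rw [ES_shift, h0, dl_zero, pure_zero_add]
  have e2 : ES (fun i => f (i + 1)) (N + 1) = ES (fun i => f (i + 1)) N := by
    rw [ES]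
    change _ + dl (f (N + 2)) = _
    rw [h2, dl_zero, add_pure_zero]
  have hnr := ES_nr f (fun i => f (i + 1)) (N + 1) (by
    intro i hi
    have : f i + f (i + 1) = (-1) ^ i *
        (((min i (2 * K - i) : ℕ) : ℤ) - ((min (i + 1) (2 * K - (i + 1)) : ℕ) : ℤ)) := by
      simp only [hf, pow_succ]; ring
    rw [this, abs_mul, abs_pow, abs_neg, abs_one, one_pow, one_mul, abs_le]
    omega)
  rw [e1, e2] at hnr
  refine ⟨_, ?_, hnr⟩
  rw [← e1]
  have := ES_level f K (N + 1) (by intro i hi; rw [hab]; omega) (by intro i hi h; rw [hab]; omega)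
  rwa [show min (N + 1) K = K by omega] at this

/-- Images of the subsymmetric ultrafilters. -/
def CC (K a : ℕ) : Set (Ultrafilter (ℕ → ℤ)) :=
  (fun u : Ultrafilter (ℕ → ℤ) => u.map (negT^[K - a])) '' SS K

theorem map_iter {a : ℕ} (i : ℕ) {u : Ultrafilter (ℕ → ℤ)} (hu : u ∈ SS (a + i)) :
    u.map (negT^[i]) ∈ SS a := by
  induction i generalizing u with
  | zero => simpa using hu
  | succ i ih =>
    have := ih (u := u.map negT) (SS_negT (by rwa [← add_assoc] at hu))
    rw [Ultrafilter.map_map] at this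
    exact this

theorem map_iter_add {a b : ℕ} (i : ℕ) {u v : Ultrafilter (ℕ → ℤ)} (hu : u ∈ SS (a + i))
    (hv : v ∈ SS (b + i)) :
    (u + v).map (negT^[i]) = u.map (negT^[i]) + v.map (negT^[i]) := by
  induction i generalizing u v with
  | zero => simp
  | succ i ih =>
    have := ih (u := u.map negT) (v := v.map negT) (SS_negT (by rwa [← add_assoc] at hu))
      (SS_negT (by rwa [← add_assoc] at hv))
    rw [← map_negT_add hu.1 hv.1, Ultrafilter.map_map, Ultrafilter.map_map,
      Ultrafilter.map_map] at this
    exact this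

end GD

open Function Set
namespace GD
attribute [local instance] Ultrafilter.add Ultrafilter.addSemigroup

theorem CC_sub {K a : ℕ} (h : a ≤ K) {x : Ultrafilter (ℕ → ℤ)} (hx : x ∈ CC K a) : x ∈ SS a := by
  obtain ⟨u, hu, rfl⟩ := hx
  exact map_iter (K - a) (by rwa [Nat.add_sub_cancel' h])

theorem CC_image {K a : ℕ} (h : a + 1 ≤ K) {x : Ultrafilter (ℕ → ℤ)} (hx : x ∈ CC K a) :
    ∃ y ∈ CC K (a + 1), y.map negT = x := by
  obtain ⟨u, hu, rfl⟩ := hx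
  refine ⟨_, ⟨u, hu, rfl⟩, ?_⟩
  have e : K - a = (K - (a + 1)) + 1 := by omega
  beta_reduce
  rw [Ultrafilter.map_map, e, iterate_succ']

theorem CC_repr {K a : ℕ} (h : a + 1 ≤ K) {x : Ultrafilter (ℕ → ℤ)} (hx : x ∈ CC K a) :
    ∃ u ∈ SS (a + (K - (a + 1))), u.map (negT^[K - (a + 1)]) = x := by
  obtain ⟨u, hu, rfl⟩ := hx
  have e : K - a = (K - (a + 1)) + 1 := by omega
  refine ⟨u.map negT, SS_negT ?_, ?_⟩
  · rwa [show a + (K - (a + 1)) + 1 = K by omega]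
  · beta_reduce
    rw [Ultrafilter.map_map, e, iterate_succ]

theorem CC_repr' {K a : ℕ} (h : a + 1 ≤ K) {x : Ultrafilter (ℕ → ℤ)} (hx : x ∈ CC K (a + 1)) :
    ∃ u ∈ SS (a + 1 + (K - (a + 1))), u.map (negT^[K - (a + 1)]) = x := by
  obtain ⟨u, hu, rfl⟩ := hx
  exact ⟨u, by rwa [show a + 1 + (K - (a + 1)) = K by omega], rfl⟩

theorem CC_add_aux {K a b c : ℕ}
    (hbc : max (b + (K - (a + 1))) (c + (K - (a + 1))) = K) {x y : Ultrafilter (ℕ → ℤ)}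
    (hx : ∃ u ∈ SS (b + (K - (a + 1))), u.map (negT^[K - (a + 1)]) = x)
    (hy : ∃ u ∈ SS (c + (K - (a + 1))), u.map (negT^[K - (a + 1)]) = y) :
    x + y ∈ CC K (a + 1) := by
  obtain ⟨u, hu, rfl⟩ := hx
  obtain ⟨v, hv, rfl⟩ := hy
  refine ⟨u + v, ?_, ?_⟩
  · have := SS_add hu hv
    rwa [hbc] at this
  · exact map_iter_add _ hu hv

theorem CC_compact (K a : ℕ) : IsCompact (CC K a) :=
  (SS_closed K).isCompact.image (continuous_map _)

theorem exists_idem (K a : ℕ) (ha : a ≤ K) : ∃ w ∈ CC K a, ∀ i ≤ a,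
    w + w.map (negT^[i]) = w ∧ w.map (negT^[i]) + w = w := by
  induction a with
  | zero =>
    obtain ⟨u, hu⟩ := SS_nonempty K
    refine ⟨_, ⟨u, hu, rfl⟩, ?_⟩
    intro i hi
    obtain rfl : i = 0 := by omega
    have := SS_zero (CC_sub ha ⟨u, hu, rfl⟩).1
    beta_reduce at this ⊢
    rw [this]
    simp [pure_zero_add]
  | succ a ih =>
    obtain ⟨w, hw, hwi⟩ := ih (by omega)
    have hww : w + w = w := by simpa using (hwi 0 (by omega)).1
    have hwSS := CC_sub (by omega) hw
    -- the fiber over `w`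
    set X : Set (Ultrafilter (ℕ → ℤ)) := CC K (a + 1) ∩ {x | x.map negT = w} with hX
    have hXc : IsCompact X :=
      (CC_compact K (a + 1)).inter_right (isClosed_singleton.preimage (continuous_map negT))
    have hXne : X.Nonempty := by
      obtain ⟨y, hy, hy'⟩ := CC_image ha hw
      exact ⟨y, hy, hy'⟩
    have hadd1 : ∀ x ∈ X, ∀ y ∈ X, x + y ∈ X := by
      rintro x ⟨hx, hx'⟩ y ⟨hy, hy'⟩
      refine ⟨CC_add_aux (b := a + 1) (c := a + 1) (by omega) (CC_repr' ha hx)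
        (CC_repr' ha hy), ?_⟩
      change (x + y).map negT = w
      rw [map_negT_add (CC_sub ha hx).1 (CC_sub ha hy).1, hx', hy', hww]
    have hmw : w.map negT + w = w ∧ w + w.map negT = w := by
      rcases Nat.eq_zero_or_pos a with rfl | hapos
      · have e : w = pure 0 := SS_zero hwSS.1
        have e2 : w.map negT = pure 0 := by
          rw [e, Ultrafilter.map_pure]
          exact congrArg pure (by ext n; simp [negT_apply, tz_zero])
        rw [e2, pure_zero_add, add_pure_zero]
        exact ⟨rfl, rfl⟩
      · have := hwi 1 hapos
        rw [iterate_one] at this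
        exact ⟨this.2, this.1⟩
    have hadd2 : ∀ x ∈ X, x + w ∈ X := by
      rintro x ⟨hx, hx'⟩
      refine ⟨CC_add_aux (b := a + 1) (c := a) (by omega) (CC_repr' ha hx)
        (CC_repr ha hw), ?_⟩
      change (x + w).map negT = w
      rw [map_negT_add (CC_sub ha hx).1 hwSS.1, hx', hmw.2]
    have hadd3 : ∀ x ∈ X, w + x ∈ X := by
      rintro x ⟨hx, hx'⟩
      refine ⟨CC_add_aux (b := a) (c := a + 1) (by omega) (CC_repr ha hw)
        (CC_repr' ha hx), ?_⟩
      change (w + x).map negT = w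
      rw [map_negT_add hwSS.1 (CC_sub ha hx).1, hx', hmw.1]
    obtain ⟨v, ⟨x, hx, hxv⟩, hvv⟩ := exists_idempotent_in_compact_add_subsemigroup
      (Ultrafilter.continuous_add_left) ((· + w) '' X) (hXne.image _)
      (hXc.image (Ultrafilter.continuous_add_left w)) (by
        rintro _ ⟨x, hx, rfl⟩ _ ⟨y, hy, rfl⟩
        refine ⟨(x + w) + y, hadd1 _ (hadd2 x hx) _ hy, ?_⟩
        simp only [add_assoc])
    beta_reduce at hxv
    have hvw : v + w = v := by rw [← hxv, add_assoc, hww]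
    have hvX : v ∈ X := hxv ▸ hadd2 x hx
    have hz := hadd3 v hvX
    have hzz : (w + v) + (w + v) = w + v := by
      rw [add_assoc, ← add_assoc v w v, hvw, hvv]
    have hzw : (w + v) + w = w + v := by rw [add_assoc, hvw]
    have hwz : w + (w + v) = w + v := by rw [← add_assoc, hww]
    refine ⟨w + v, hz.1, ?_⟩
    intro i hi
    rcases i with _ | i
    · simpa using hzz
    · rw [iterate_succ, ← Ultrafilter.map_map, show (w + v).map negT = w from hz.2]
      obtain ⟨h1, h2⟩ := hwi i (by omega)
      constructor
      · rw [← hzw, add_assoc, h1]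
      · rw [← hwz, ← add_assoc, h2]

theorem exists_gowers (K : ℕ) : ∃ u : ℕ → Ultrafilter (ℕ → ℤ),
    (∀ a ≤ K, u a ∈ SS a) ∧ (∀ a ≤ K, u a = (u K).map (negT^[K - a])) ∧
    ∀ a ≤ K, ∀ b ≤ K, u a + u b = u (max a b) := by
  obtain ⟨w, hw, hwi⟩ := exists_idem K K le_rfl
  have hwS := CC_sub le_rfl hw
  refine ⟨fun a => w.map (negT^[K - a]), ?_, ?_, ?_⟩
  · intro a ha
    exact map_iter (K - a) (by rwa [Nat.add_sub_cancel' ha])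
  · intro a ha
    simp
  · intro a ha b hb
    rcases le_total a b with h | h
    · rw [max_eq_right h]
      beta_reduce
      have e : K - a = (b - a) + (K - b) := by omega
      have e2 : w.map (negT^[K - a]) = (w.map (negT^[b - a])).map (negT^[K - b]) := by
        rw [Ultrafilter.map_map, ← iterate_add, e, add_comm]
      have h1 : w.map (negT^[b - a]) ∈ SS (K - (b - a) - (K - b) + (K - b)) :=
        map_iter (b - a) (by rwa [show K - (b - a) - (K - b) + (K - b) + (b - a) = K by omega])
      rw [e2, ← map_iter_add (b := b) (K - b) h1 (by rwa [Nat.add_sub_cancel' hb]),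
        (hwi (b - a) (by omega)).2]
    · rw [max_eq_left h]
      beta_reduce
      have e : K - b = (a - b) + (K - a) := by omega
      have e2 : w.map (negT^[K - b]) = (w.map (negT^[a - b])).map (negT^[K - a]) := by
        rw [Ultrafilter.map_map, ← iterate_add, e, add_comm]
      have h1 : w.map (negT^[a - b]) ∈ SS (K - (a - b) - (K - a) + (K - a)) :=
        map_iter (a - b) (by rwa [show K - (a - b) - (K - a) + (K - a) + (a - b) = K by omega])
      rw [e2, ← map_iter_add (a := a) (K - a) (by rwa [Nat.add_sub_cancel' ha]) h1,
        (hwi (a - b) (by omega)).1]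

end GD

open Function Set
namespace GD

/-! ### Scalar computations -/

/-- Scalar halving. -/
def ph (v : ℤ) : ℤ := if v % 2 = 0 then v / 2 else if 0 < v then (v - 1) / 2 else (v + 1) / 2

theorem Phi_apply (p : ℕ → ℤ) (n : ℕ) : Phi p n = ph (p n) := rfl

theorem ph_zero : ph 0 = 0 := by simp [ph]

/-- Closed form of iterated scalar tetris. -/
def tzi (i : ℕ) (v : ℤ) : ℤ := if 0 < v then max (v - i) 0 else min (v + i) 0

theorem tz_iter (i : ℕ) (v : ℤ) : tz^[i] v = tzi i v := by
  induction i with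
  | zero => simp only [iterate_zero, id, tzi]; split_ifs <;> omega
  | succ i ih =>
    rw [iterate_succ_apply', ih]
    unfold tz tzi
    split_ifs <;> omega

theorem tetris_iter (i : ℕ) (p : ℕ → ℤ) (n : ℕ) : tetris^[i] p n = tzi i (p n) := by
  rw [← tz_iter]
  induction i with
  | zero => rfl
  | succ i ih => rw [iterate_succ_apply', iterate_succ_apply', tetris_apply, ih]

/-- Closed form of the iterates of `-T`. -/
def ntzi (i : ℕ) (v : ℤ) : ℤ := if i % 2 = 0 then tzi i v else - tzi i v

theorem negT_iter (i : ℕ) (p : ℕ → ℤ) (n : ℕ) : negT^[i] p n = ntzi i (p n) := by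
  induction i with
  | zero => simp only [iterate_zero, id, ntzi, tzi]; split_ifs <;> omega
  | succ i ih =>
    rw [iterate_succ_apply', negT_apply, ih]
    unfold tz ntzi tzi
    split_ifs <;> omega

theorem ntzi_zero (i : ℕ) : ntzi i 0 = 0 := by
  unfold ntzi tzi
  split_ifs <;> omega

theorem tzi_zero (i : ℕ) : tzi i 0 = 0 := by
  unfold tzi
  split_ifs <;> omega

theorem ntzi_full (K : ℕ) (v : ℤ) (h : |v| ≤ K) : ntzi K v = 0 := by
  rw [abs_le] at h
  unfold ntzi tzi
  split_ifs <;> omega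

theorem tzi_tzi (i j : ℕ) (v : ℤ) : tzi i (tzi j v) = tzi (i + j) v := by
  rw [← tz_iter, ← tz_iter, ← tz_iter, ← iterate_add_apply]

theorem sc1 (i : ℕ) (v : ℤ) : tzi i (ph v) = ph (tzi (2 * i) v) := by
  unfold ph tzi
  push_cast
  split_ifs <;> omega

theorem ph_neg (v : ℤ) : ph (-v) = - ph v := by
  unfold ph
  split_ifs <;> omega

theorem ph_dist (v w : ℤ) (h : |v - w| ≤ 2) : |ph v - ph w| ≤ 1 := by
  rw [abs_le] at *
  unfold ph
  split_ifs <;> omega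

theorem tzi_dist (i : ℕ) (v : ℤ) : |tzi i v - tzi (i + 1) v| ≤ 1 := by
  rw [abs_le]
  unfold tzi
  push_cast
  split_ifs <;> omega

theorem ph_abs {k : ℕ} {v : ℤ} (h : |v| ≤ (2 * k : ℕ)) : |ph v| ≤ k := by
  rw [abs_le] at *
  unfold ph
  push_cast at h
  split_ifs <;> omega

theorem ph_abs_eq {k : ℕ} {v : ℤ} (h : |v| = (2 * k : ℕ)) : |ph v| = k := by
  rw [abs_eq (by positivity)] at *
  unfold ph
  push_cast at h
  split_ifs <;> omega

theorem tzi_ne {k i : ℕ} {v : ℤ} (h : |v| = (k : ℕ)) (hi : i < k) : tzi i v ≠ 0 := by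
  rw [abs_eq (by positivity)] at *
  unfold tzi
  split_ifs <;> omega

theorem isFin_Phi {k : ℕ} {p : ℕ → ℤ} (hp : IsFin (2 * k) p) : IsFin k (Phi p) := by
  refine ⟨hp.1.subset ?_, fun n => ?_, ?_⟩
  · intro n hn hn'
    apply hn
    rw [Phi_apply, hn', ph_zero]
  · rw [Phi_apply]
    exact ph_abs (hp.2.1 n)
  · obtain ⟨n, hn⟩ := hp.2.2
    exact ⟨n, by rw [Phi_apply]; exact ph_abs_eq hn⟩

/-- The level at which the `n`-th vector is used. -/
def lev (J : ℕ) (σ e : ℤ) (l : ℕ) : ℕ :=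
  if e = 0 then 0 else if e = σ then 2 * (J - l) else 2 * (J - l) - 1

/-- The basic approximation: `x` is the coordinate of the `(-T)`-combination. -/
theorem sc_main (k J l : ℕ) (hJ : J ≤ k) (hl : l < J) (σ e v : ℤ) (hv : |v| ≤ (2 * k : ℕ))
    (hσ : σ = 1 ∨ σ = -1) (he : e = 0 ∨ e = 1 ∨ e = -1) :
    |σ * (e * tzi (2 * (l + (k - J))) v) - ntzi (2 * k - lev J σ e l) v| ≤ 1 := by
  unfold lev
  by_cases h0 : e = 0
  · subst h0
    simp only [if_true, Nat.sub_zero]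
    rw [ntzi_full _ _ hv]
    simp
  rw [if_neg h0]
  by_cases h1 : e = σ
  · rw [if_pos h1, show 2 * k - 2 * (J - l) = 2 * (l + (k - J)) by omega]
    have : σ * (e * tzi (2 * (l + (k - J))) v) = tzi (2 * (l + (k - J))) v := by
      rcases hσ with rfl | rfl <;> subst h1 <;> ring
    rw [this, ntzi, if_pos (by omega)]
    simp
  · rw [if_neg h1, show 2 * k - (2 * (J - l) - 1) = 2 * (l + (k - J)) + 1 by omega]
    have : σ * (e * tzi (2 * (l + (k - J))) v) = - tzi (2 * (l + (k - J))) v := by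
      rcases hσ with rfl | rfl <;> rcases he with rfl | rfl | rfl <;> first | exact absurd rfl h0 | exact absurd rfl h1 | ring
    rw [this, ntzi, if_neg (by omega)]
    have := tzi_dist (2 * (l + (k - J))) v
    rw [abs_le] at *
    omega

theorem sc_final (i : ℕ) (e v x : ℤ) (he : e = 0 ∨ e = 1 ∨ e = -1)
    (h : |e * tzi (2 * i) v - x| ≤ 2) : |e * tzi i (ph v) - ph x| ≤ 1 := by
  have : e * tzi i (ph v) = ph (e * tzi (2 * i) v) := by
    rw [sc1]
    rcases he with rfl | rfl | rfl
    · simp [ph_zero]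
    · simp
    · simp [ph_neg]
  rw [this]
  exact ph_dist _ _ h

/-- Functional form of membership in the span. -/
theorem span_fn {J : ℕ} {Y : ℕ → ℕ → ℤ} {q : ℕ → ℤ} (h : InSpanPM J Y q) :
    ∃ (e : ℕ → ℤ) (l : ℕ → ℕ) (M : ℕ), (∀ n, e n = 0 ∨ e n = 1 ∨ e n = -1) ∧ (∀ n, l n < J) ∧
      (∃ n, e n ≠ 0 ∧ l n = 0) ∧ e M ≠ 0 ∧ (∀ n, e n ≠ 0 → n ≤ M) ∧
      ∀ c, q c = ∑ n ∈ Finset.range (M + 1), e n * tzi (l n) (Y n c) := by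
  classical
  obtain ⟨m, n, ε, j, hn, hε, hj, ⟨i0, hi0⟩, hq⟩ := h
  have hJ : 0 < J := by have := hj i0; omega
  have hinj := hn.injective
  set e : ℕ → ℤ := Function.extend n ε 0 with he
  set l : ℕ → ℕ := Function.extend n j 0 with hl
  have e1 : ∀ i, e (n i) = ε i := fun i => hinj.extend_apply _ _ _
  have l1 : ∀ i, l (n i) = j i := fun i => hinj.extend_apply _ _ _
  have e0 : ∀ a, (¬ ∃ i, n i = a) → e a = 0 := fun a ha => extend_apply' _ _ _ ha
  have l0 : ∀ a, (¬ ∃ i, n i = a) → l a = 0 := fun a ha => extend_apply' _ _ _ ha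
  have hε0 : ∀ i, ε i ≠ 0 := by
    intro i
    rcases hε i with h | h <;> rw [h] <;> decide
  refine ⟨e, l, n (Fin.last m), ?_, ?_, ⟨n i0, ?_, ?_⟩, ?_, ?_, ?_⟩
  · intro a
    by_cases ha : ∃ i, n i = a
    · obtain ⟨i, rfl⟩ := ha
      rw [e1]
      exact Or.inr (hε i)
    · exact Or.inl (e0 a ha)
  · intro a
    by_cases ha : ∃ i, n i = a
    · obtain ⟨i, rfl⟩ := ha
      rw [l1]
      exact hj i
    · rwa [l0 a ha]
  · rw [e1]; exact hε0 _
  · rw [l1, hi0]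
  · rw [e1]; exact hε0 _
  · intro a ha
    by_cases ha' : ∃ i, n i = a
    · obtain ⟨i, rfl⟩ := ha'
      exact hn.monotone (Fin.le_last i)
    · exact absurd (e0 a ha') ha
  · intro c
    rw [hq, Finset.sum_apply]
    have h1 : ∀ i, (ε i • tetris^[j i] (Y (n i))) c = e (n i) * tzi (l (n i)) (Y (n i) c) := by
      intro i
      rw [e1, l1, Pi.smul_apply, tetris_iter, smul_eq_mul]
    simp only [h1]
    rw [← Finset.sum_image (s := Finset.univ) (g := n)
      (f := fun a => e a * tzi (l a) (Y a c)) (fun a _ b _ h => hinj h)]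
    apply Finset.sum_subset
    · intro a ha
      obtain ⟨i, _, rfl⟩ := Finset.mem_image.1 ha
      have : n i ≤ n (Fin.last m) := hn.monotone (Fin.le_last i)
      rw [Finset.mem_range]
      omega
    · intro a _ ha
      rw [e0 a, zero_mul]
      rintro ⟨i, rfl⟩
      exact ha (Finset.mem_image_of_mem _ (Finset.mem_univ _))

/-- At each coordinate at most one vector of a block sequence is nonzero. -/
theorem block_coord {K : ℕ} {P : ℕ → ℕ → ℤ} (hP : IsBlockSeq K P) (c : ℕ) :
    ∃ n₀, ∀ n, n ≠ n₀ → P n c = 0 := by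
  by_cases h : ∃ n₀, P n₀ c ≠ 0
  · obtain ⟨n₀, h0⟩ := h
    refine ⟨n₀, fun n hn => ?_⟩
    by_contra hc
    rcases lt_or_gt_of_ne hn with h1 | h1
    · exact lt_irrefl _ (hP.2 _ _ h1 c c hc h0)
    · exact lt_irrefl _ (hP.2 _ _ h1 c c h0 hc)
  · push Not at h
    exact ⟨0, fun n _ => h n⟩

end GD

open Function Set
namespace GD
attribute [local instance] Ultrafilter.add Ultrafilter.addSemigroup

theorem fit_mem {a : ℕ} {u : Ultrafilter (ℕ → ℤ)} (hu : IsCofiniteUF a u) (t : List (ℕ → ℤ)) :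
    {p | IsFin a p ∧ ∀ q ∈ t, (support q).Finite → BlockLt q p} ∈ u := by
  refine Filter.inter_mem hu.1 ?_
  induction t with
  | nil => exact Filter.Eventually.of_forall fun p q hq => by simp at hq
  | cons q t ih =>
    by_cases hq : (support q).Finite
    · obtain ⟨M, hM⟩ := hq.bddAbove
      filter_upwards [ih, hu.2 (M + 1)] with p hp hp' q' hq' hf
      rcases List.mem_cons.1 hq' with rfl | h
      · intro m n hm hn
        have h1 := hM (show m ∈ support q' from hm)
        by_contra hc
        exact hn (hp' n (by omega))
      · exact hp q' h hf
    · filter_upwards [ih] with p hp q' hq' hf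
      rcases List.mem_cons.1 hq' with rfl | h
      · exact absurd hf hq
      · exact hp q' h hf

/-- States of the fusion argument. -/
structure St (k : ℕ) where
  j : Fin k
  t : List (ℕ → ℤ)
  x : ℕ → ℤ
  a : ℕ

/-- The target set together with its symmetrization. -/
def WW {k : ℕ} (B : Fin k → List (ℕ → ℤ) → Set (ℕ → ℤ)) (j : Fin k) (t : List (ℕ → ℤ)) :
    Set (ℕ → ℤ) :=
  (Phi ⁻¹' B j t) ∩ {p | -p ∈ approx 1 (Phi ⁻¹' B j t)}

open Classical in
/-- The recorded vector. -/
noncomputable def rp {k : ℕ} (B : Fin k → List (ℕ → ℤ) → Set (ℕ → ℤ)) (τ : Bool) (s : St k) :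
    ℕ → ℤ :=
  if τ then Phi s.x else
    if h : -s.x ∈ approx 1 (Phi ⁻¹' B s.j s.t) then Phi h.choose else 0

/-- Add a vector to the current block. -/
def addp {k : ℕ} (s : St k) (b : ℕ) (p : ℕ → ℤ) : St k :=
  if b ≤ 2 * (s.j.1 + 1) then ⟨s.j, s.t, s.x + negT^[2 * k - b] p, max s.a b⟩ else s

/-- Finish the current block. -/
noncomputable def fin {k : ℕ} (B : Fin k → List (ℕ → ℤ) → Set (ℕ → ℤ)) (τ : Option Bool)
    (s : St k) : St k :=
  match τ with
  | none => s
  | some τ => if s.a = 2 * (s.j.1 + 1) then ⟨s.j, s.t ++ [rp B τ s], 0, 0⟩ else s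

/-- One step. -/
noncomputable def stp {k : ℕ} (B : Fin k → List (ℕ → ℤ) → Set (ℕ → ℤ)) (s : St k)
    (d : Fin (2 * k + 1) × Option Bool) (p : ℕ → ℤ) : St k :=
  fin B d.2 (addp s d.1.1 p)

/-- Good states. -/
def Gd {k : ℕ} (u : ℕ → Ultrafilter (ℕ → ℤ)) (B : Fin k → List (ℕ → ℤ) → Set (ℕ → ℤ))
    (s : St k) : Prop :=
  s.a ≤ 2 * (s.j.1 + 1) ∧ ∀ b ≤ 2 * (s.j.1 + 1), max s.a b = 2 * (s.j.1 + 1) →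
    {y | s.x + y ∈ WW B s.j s.t} ∈ u b

section
variable {k : ℕ} {u : ℕ → Ultrafilter (ℕ → ℤ)} {B : Fin k → List (ℕ → ℤ) → Set (ℕ → ℤ)}

theorem WW_mem (hS : ∀ a ≤ 2 * k, u a ∈ SS a)
    (hB : ∀ j t, B j t ∈ (u (2 * (j.1 + 1))).map Phi) (j : Fin k) (t : List (ℕ → ℤ)) :
    WW B j t ∈ u (2 * (j.1 + 1)) := by
  have h1 : Phi ⁻¹' B j t ∈ u (2 * (j.1 + 1)) := hB j t
  exact Filter.inter_mem h1 ((hS _ (by omega)).2 _ h1)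

theorem Gd_zero (hS : ∀ a ≤ 2 * k, u a ∈ SS a)
    (hB : ∀ j t, B j t ∈ (u (2 * (j.1 + 1))).map Phi) (j : Fin k) (t : List (ℕ → ℤ)) :
    Gd u B ⟨j, t, 0, 0⟩ := by
  refine ⟨Nat.zero_le _, fun b _ h => ?_⟩
  simp only [Nat.zero_max] at h
  subst h
  simpa using WW_mem hS hB j t

theorem Gd_fin (hS : ∀ a ≤ 2 * k, u a ∈ SS a)
    (hB : ∀ j t, B j t ∈ (u (2 * (j.1 + 1))).map Phi) (τ : Option Bool) {s : St k}
    (h : Gd u B s) : Gd u B (fin B τ s) := by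
  unfold fin
  cases τ with
  | none => exact h
  | some τ =>
    dsimp only
    split_ifs
    · exact Gd_zero hS hB _ _
    · exact h

theorem Gd_addp (hm : ∀ a ≤ 2 * k, u a = (u (2 * k)).map (negT^[2 * k - a]))
    (ha : ∀ a ≤ 2 * k, ∀ b ≤ 2 * k, u a + u b = u (max a b)) (b : ℕ) {s : St k}
    (h : Gd u B s) : ∀ᶠ p in (u (2 * k) : Filter (ℕ → ℤ)), Gd u B (addp s b p) := by
  unfold addp
  split_ifs with hb
  swap
  · exact Filter.Eventually.of_forall fun _ => h
  have hjk : 2 * (s.j.1 + 1) ≤ 2 * k := by omega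
  have key : ∀ᶠ y in (u b : Filter (ℕ → ℤ)), ∀ b' ∈ Finset.range (2 * (s.j.1 + 1) + 1),
      max (max s.a b) b' = 2 * (s.j.1 + 1) → {z | s.x + y + z ∈ WW B s.j s.t} ∈ u b' := by
    rw [Filter.eventually_all_finset]
    intro b' hb'
    rw [Finset.mem_range] at hb'
    by_cases hmx : max (max s.a b) b' = 2 * (s.j.1 + 1)
    · have h1 := h.2 (max b b') (by omega) (by omega)
      rw [← ha b (by omega) b' (by omega), mem_add] at h1
      filter_upwards [h1] with y hy _
      filter_upwards [hy] with z hz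
      simpa [add_assoc] using hz
    · exact Filter.Eventually.of_forall fun _ h => absurd h hmx
  rw [hm b (by omega)] at key
  have key' : ∀ᶠ p in (u (2 * k) : Filter (ℕ → ℤ)), _ := key
  filter_upwards [key'] with p hp
  refine ⟨by have := h.1; dsimp only; omega, fun b' hb' hmx => ?_⟩
  exact hp b' (by rw [Finset.mem_range]; exact Nat.lt_succ_of_le hb') hmx

theorem Gd_mem (hS : ∀ a ≤ 2 * k, u a ∈ SS a) {s : St k} (h : Gd u B s)
    (hs : s.a = 2 * (s.j.1 + 1)) : s.x ∈ WW B s.j s.t := by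
  have h1 := h.2 0 (Nat.zero_le _) (by simp [hs])
  rw [SS_zero (hS 0 (Nat.zero_le _)).1, Ultrafilter.mem_pure] at h1
  simpa using h1

/-- Reachable states. -/
def Rch (B : Fin k → List (ℕ → ℤ) → Set (ℕ → ℤ)) (P : ℕ → ℕ → ℤ) (m : ℕ) : Set (St k) :=
  reachL (stp B) (range fun j : Fin k => (⟨j, [], 0, 0⟩ : St k)) (res P m)

theorem Rch_succ {P : ℕ → ℕ → ℤ} {m : ℕ} {s : St k} (hs : s ∈ Rch B P m) (b : ℕ)
    (hb : b ≤ 2 * k) (τ : Option Bool) : fin B τ (addp s b (P m)) ∈ Rch B P (m + 1) := by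
  unfold Rch
  rw [res_succ, reachL_append]
  exact ⟨s, hs, (⟨b, by omega⟩, τ), mem_univ _, rfl⟩

theorem fusion_seq (hS : ∀ a ≤ 2 * k, u a ∈ SS a)
    (hm : ∀ a ≤ 2 * k, u a = (u (2 * k)).map (negT^[2 * k - a]))
    (ha : ∀ a ≤ 2 * k, ∀ b ≤ 2 * k, u a + u b = u (max a b))
    (hB : ∀ j t, B j t ∈ (u (2 * (j.1 + 1))).map Phi) :
    ∃ P, IsBlockSeq (2 * k) P ∧ ∀ m, ∀ s ∈ Rch B P m, Gd u B s := by
  have hu := (hS (2 * k) le_rfl).1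
  obtain ⟨P, hP1, hP2⟩ := fusion (u (2 * k)) (stp B) (Gd u B)
    (range fun j : Fin k => (⟨j, [], 0, 0⟩ : St k)) (finite_range _)
    (by rintro _ ⟨j, rfl⟩; exact Gd_zero hS hB _ _)
    (by
      intro s hs d
      filter_upwards [Gd_addp hm ha d.1.1 hs] with p hp using Gd_fin hS hB _ hp)
    (fun t => {p | IsFin (2 * k) p ∧ ∀ q ∈ t, (support q).Finite → BlockLt q p})
    (fit_mem hu)
  refine ⟨P, ⟨fun n => (hP1 n).1, fun m n hmn => (hP1 n).2 _ (mem_res _ _ _ hmn) (hP1 m).1.1⟩, hP2⟩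

theorem blk {P : ℕ → ℕ → ℤ} {m M : ℕ} (hmM : m ≤ M) {j : Fin k} {t : List (ℕ → ℤ)} {b : ℕ → ℕ}
    (hb : ∀ n, b n ≤ 2 * (j.1 + 1)) (h0 : (⟨j, t, 0, 0⟩ : St k) ∈ Rch B P m) :
    ∃ a, (⟨j, t, ∑ n ∈ Finset.Ico m M, negT^[2 * k - b n] (P n), a⟩ : St k) ∈ Rch B P M ∧
      ∀ n, m ≤ n → n < M → b n ≤ a := by
  induction M, hmM using Nat.le_induction with
  | base => exact ⟨0, by simpa using h0, fun n h1 h2 => by omega⟩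
  | succ M hM ih =>
    obtain ⟨a, h1, h2⟩ := ih
    refine ⟨max a (b M), ?_, fun n h3 h4 => ?_⟩
    · have h5 := Rch_succ h1 (b M) (by have := hb M; omega) none
      simp only [fin, addp] at h5
      rw [if_pos (hb M)] at h5
      rwa [Finset.sum_Ico_succ_top hM]
    · rcases Nat.lt_succ_iff_lt_or_eq.1 h4 with h | rfl
      · exact le_max_of_le_left (h2 n h3 h)
      · exact le_max_right _ _

theorem blk_fin (hS : ∀ a ≤ 2 * k, u a ∈ SS a) {P : ℕ → ℕ → ℤ}
    (hG : ∀ m, ∀ s ∈ Rch B P m, Gd u B s) {m M : ℕ} (hmM : m ≤ M) {j : Fin k}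
    {t : List (ℕ → ℤ)} {b : ℕ → ℕ}
    (hb : ∀ n, b n ≤ 2 * (j.1 + 1)) (hb' : ∃ n, m ≤ n ∧ n ≤ M ∧ b n = 2 * (j.1 + 1))
    (h0 : (⟨j, t, 0, 0⟩ : St k) ∈ Rch B P m) {x : ℕ → ℤ}
    (hx : x = ∑ n ∈ Finset.Ico m (M + 1), negT^[2 * k - b n] (P n)) :
    (Phi x ∈ B j t ∧ (⟨j, t ++ [Phi x], 0, 0⟩ : St k) ∈ Rch B P (M + 1)) ∧
    ∃ z, normLe (-x - z) 1 ∧ Phi z ∈ B j t ∧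
      (⟨j, t ++ [Phi z], 0, 0⟩ : St k) ∈ Rch B P (M + 1) := by
  obtain ⟨a, h1, h2⟩ := blk hmM hb h0
  have h5 := fun τ => Rch_succ h1 (b M) (by have := hb M; omega) τ
  have e : addp (⟨j, t, ∑ n ∈ Finset.Ico m M, negT^[2 * k - b n] (P n), a⟩ : St k) (b M) (P M)
      = ⟨j, t, x, max a (b M)⟩ := by
    unfold addp
    rw [if_pos (hb M), hx, Finset.sum_Ico_succ_top hmM]
  rw [e] at h5
  have hg := hG _ _ (h5 none)
  have hN : max a (b M) = 2 * (j.1 + 1) := by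
    refine le_antisymm (show max a (b M) ≤ 2 * (j.1 + 1) from hg.1) ?_
    obtain ⟨n, n1, n2, n3⟩ := hb'
    rw [← n3]
    rcases Nat.lt_or_eq_of_le n2 with h | rfl
    · exact le_max_of_le_left (h2 n n1 h)
    · exact le_max_right _ _
  have hW : x ∈ WW B j t := Gd_mem hS hg hN
  have h6 : ∀ τ, (⟨j, t ++ [rp B τ ⟨j, t, x, max a (b M)⟩], 0, 0⟩ : St k) ∈ Rch B P (M + 1) := by
    intro τ
    have := h5 (some τ)
    simp only [fin] at this
    rwa [if_pos hN] at this
  refine ⟨⟨hW.1, by simpa [rp] using h6 true⟩, ?_⟩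
  have hz : -x ∈ approx 1 (Phi ⁻¹' B j t) := hW.2
  refine ⟨hz.choose, hz.choose_spec.2, hz.choose_spec.1, ?_⟩
  have h7 := h6 false
  have e2 : rp B false ⟨j, t, x, max a (b M)⟩ = Phi hz.choose := by
    unfold rp
    rw [if_neg (by simp), dif_pos hz]
  rwa [e2] at h7

theorem core_step (hS : ∀ a ≤ 2 * k, u a ∈ SS a) {P : ℕ → ℕ → ℤ} (hP : IsBlockSeq (2 * k) P)
    (hG : ∀ m, ∀ s ∈ Rch B P m, Gd u B s) {m M : ℕ} {j : Fin k} {t : List (ℕ → ℤ)}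
    (h0 : (⟨j, t, 0, 0⟩ : St k) ∈ Rch B P m) {q : ℕ → ℤ} {e : ℕ → ℤ} {l : ℕ → ℕ}
    (he : ∀ n, e n = 0 ∨ e n = 1 ∨ e n = -1) (hl : ∀ n, l n < j.1 + 1)
    (hel : ∃ n, e n ≠ 0 ∧ l n = 0) (hM : ∀ n, e n ≠ 0 → n ≤ M) (hm : ∀ n, e n ≠ 0 → m ≤ n)
    (hq : ∀ c, q c = ∑ n ∈ Finset.range (M + 1),
      e n * tzi (l n) (tetris^[k - (j.1 + 1)] (Phi (P n)) c)) :
    ∃ r ∈ B j t, normLe (q - r) 1 ∧ (⟨j, t ++ [r], 0, 0⟩ : St k) ∈ Rch B P (M + 1) := by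
  have hJ : j.1 + 1 ≤ k := j.2
  obtain ⟨σ, hσ, n1, hn1, hn1'⟩ : ∃ σ : ℤ, (σ = 1 ∨ σ = -1) ∧ ∃ n, e n = σ ∧ l n = 0 := by
    obtain ⟨n, h1, h2⟩ := hel
    exact ⟨e n, (he n).resolve_left h1, n, rfl, h2⟩
  have hσ0 : σ ≠ 0 := by rcases hσ with h | h <;> rw [h] <;> decide
  have hmn := hm n1 (hn1 ▸ hσ0)
  have hnM := hM n1 (hn1 ▸ hσ0)
  set b : ℕ → ℕ := fun n => lev (j.1 + 1) σ (e n) (l n) with hbdef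
  have hb : ∀ n, b n ≤ 2 * (j.1 + 1) := by
    intro n
    simp only [hbdef, lev]
    split_ifs <;> omega
  have hb0 : ∀ n, e n = 0 → b n = 0 := by
    intro n hn
    simp [hbdef, lev, hn]
  obtain ⟨x, hx⟩ : ∃ x, x = ∑ n ∈ Finset.Ico m (M + 1), negT^[2 * k - b n] (P n) := ⟨_, rfl⟩
  have hxc : ∀ c, x c = ∑ n ∈ Finset.range (M + 1), ntzi (2 * k - b n) (P n c) := by
    intro c
    rw [hx, Finset.sum_apply]
    simp only [negT_iter]
    apply Finset.sum_subset
    · intro n hn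
      rw [Finset.mem_Ico] at hn
      exact Finset.mem_range.2 hn.2
    · intro n hn hn'
      have : e n = 0 := by
        by_contra hc
        have := hm n hc
        rw [Finset.mem_Ico] at hn'
        rw [Finset.mem_range] at hn
        omega
      rw [hb0 n this]
      exact ntzi_full _ _ ((hP.1 n).2.1 c)
  have hcoord : ∀ c, ∃ (v e' : ℤ) (i : ℕ), (e' = 0 ∨ e' = 1 ∨ e' = -1) ∧
      |σ * (e' * tzi (2 * i) v) - x c| ≤ 1 ∧ q c = e' * tzi i (ph v) := by
    intro c
    obtain ⟨n₀, hn₀⟩ := block_coord hP c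
    rw [hxc, hq]
    simp only [tetris_iter, tzi_tzi, Phi_apply]
    by_cases h : n₀ ∈ Finset.range (M + 1)
    · rw [Finset.sum_eq_single_of_mem n₀ h, Finset.sum_eq_single_of_mem n₀ h]
      · exact ⟨P n₀ c, e n₀, _, he n₀,
          sc_main k (j.1 + 1) (l n₀) hJ (hl n₀) σ (e n₀) _ ((hP.1 n₀).2.1 c) hσ (he n₀), rfl⟩
      · intro n _ hn
        rw [hn₀ n hn, ph_zero, tzi_zero, mul_zero]
      · intro n _ hn
        rw [hn₀ n hn, ntzi_zero]
    · refine ⟨0, 0, 0, Or.inl rfl, ?_, ?_⟩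
      · rw [Finset.sum_eq_zero]
        · simp
        · intro n hn
          rw [hn₀ n (by rintro rfl; exact h hn), ntzi_zero]
      · rw [Finset.sum_eq_zero]
        · simp
        · intro n hn
          rw [hn₀ n (by rintro rfl; exact h hn), ph_zero, tzi_zero, mul_zero]
  obtain ⟨⟨hr1, hr2⟩, z, hz1, hz2, hz3⟩ := blk_fin hS hG (hmn.trans hnM) hb
    ⟨n1, hmn, hnM, by simp [hbdef, lev, hn1, hn1', hσ0]⟩ h0 hx
  rcases hσ with rfl | rfl
  · refine ⟨_, hr1, fun c => ?_, hr2⟩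
    obtain ⟨v, e', i, h1, h2, h3⟩ := hcoord c
    rw [Pi.sub_apply, Phi_apply, h3]
    refine sc_final i e' v _ h1 ?_
    rw [one_mul] at h2
    omega
  · refine ⟨_, hz2, fun c => ?_, hz3⟩
    obtain ⟨v, e', i, h1, h2, h3⟩ := hcoord c
    rw [Pi.sub_apply, Phi_apply, h3]
    refine sc_final i e' v _ h1 ?_
    have h4 := hz1 c
    simp only [Pi.sub_apply, Pi.neg_apply] at h4
    rw [abs_le] at *
    push_cast at h4
    omega

theorem core (hS : ∀ a ≤ 2 * k, u a ∈ SS a)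
    (hm : ∀ a ≤ 2 * k, u a = (u (2 * k)).map (negT^[2 * k - a]))
    (ha : ∀ a ≤ 2 * k, ∀ b ≤ 2 * k, u a + u b = u (max a b))
    (hB : ∀ j t, B j t ∈ (u (2 * (j.1 + 1))).map Phi) :
    ∃ P, IsBlockSeq (2 * k) P ∧ ∀ (j : Fin k) (Q : ℕ → ℕ → ℤ), IsBlockSeq (j.1 + 1) Q →
      (∀ n, InSpanPM (j.1 + 1) (fun m => tetris^[k - (j.1 + 1)] (Phi (P m))) (Q n)) →
      ∃ R : ℕ → ℕ → ℤ, (∀ n, R n ∈ B j (res R n)) ∧ ∀ n, normLe (Q n - R n) 1 := by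
  obtain ⟨P, hP, hG⟩ := fusion_seq hS hm ha hB
  refine ⟨P, hP, fun j Q hQ hspan => ?_⟩
  have hJ : j.1 + 1 ≤ k := j.2
  choose e l M he hl hel heM hM hq using fun i => span_fn (hspan i)
  -- nonzero coordinates
  have hnz : ∀ n, ∃ c, P n c ≠ 0 ∧ ∀ i, e i n ≠ 0 → Q i c ≠ 0 := by
    intro n
    obtain ⟨c, hc⟩ := (hP.1 n).2.2
    have hPc : P n c ≠ 0 := by
      intro h
      rw [h] at hc
      simp at hc
      omega
    refine ⟨c, hPc, fun i hn => ?_⟩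
    obtain ⟨n₀, hn₀⟩ := block_coord hP c
    have hnn : n = n₀ := by
      by_contra hne
      exact hPc (hn₀ n hne)
    subst hnn
    rw [hq, Finset.sum_eq_single_of_mem n (Finset.mem_range.2 (Nat.lt_succ_of_le (hM i n hn)))]
    · simp only [tetris_iter, tzi_tzi, Phi_apply]
      exact mul_ne_zero hn (tzi_ne (k := k) (ph_abs_eq hc) (by have := hl i n; omega))
    · intro n' _ hn'
      simp only [tetris_iter, Phi_apply]
      rw [hn₀ n' hn', ph_zero, tzi_zero, tzi_zero, mul_zero]
  have hlt : ∀ i n, e (i + 1) n ≠ 0 → M i + 1 ≤ n := by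
    intro i n hn
    obtain ⟨c, hc1, hc2⟩ := hnz (M i)
    obtain ⟨d, hd1, hd2⟩ := hnz n
    have h1 : c < d := hQ.2 i (i + 1) (Nat.lt_succ_self i) c d (hc2 i (heM i)) (hd2 _ hn)
    by_contra hlt
    rcases Nat.lt_or_eq_of_le (show n ≤ M i by omega) with h | h
    · have := hP.2 n (M i) h d c hd1 hc1
      omega
    · subst h
      exact lt_irrefl _ (hQ.2 i (i + 1) (Nat.lt_succ_self i) c c (hc2 i (heM i)) (hc2 _ hn))
  set st : ℕ → ℕ := fun i => Nat.casesOn i 0 (fun i => M i + 1) with hst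
  have hst' : ∀ i n, e i n ≠ 0 → st i ≤ n := by
    intro i n hn
    cases i with
    | zero => exact Nat.zero_le _
    | succ i => exact hlt i n hn
  have hex : ∀ t : List (ℕ → ℤ), ∃ r, (⟨j, t, 0, 0⟩ : St k) ∈ Rch B P (st t.length) →
      r ∈ B j t ∧ normLe (Q t.length - r) 1 ∧
        (⟨j, t ++ [r], 0, 0⟩ : St k) ∈ Rch B P (st (t.length + 1)) := by
    intro t
    by_cases h : (⟨j, t, 0, 0⟩ : St k) ∈ Rch B P (st t.length)
    · obtain ⟨r, h1, h2, h3⟩ := core_step hS hP hG h (he t.length) (hl _) (hel _) (hM _)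
        (hst' _) (hq _)
      exact ⟨r, fun _ => ⟨h1, h2, h3⟩⟩
    · exact ⟨0, fun h' => absurd h' h⟩
  choose g hg using hex
  have hR : ∀ i, mkBr [] g i = g (res (mkBr [] g) i) := fun i => mkBr_ge _ _ _ (Nat.zero_le _)
  have hinv : ∀ i, (⟨j, res (mkBr [] g) i, 0, 0⟩ : St k) ∈ Rch B P (st i) := by
    intro i
    induction i with
    | zero => exact ⟨j, rfl⟩
    | succ i ih =>
      have h1 := (hg (res (mkBr [] g) i) (by rwa [res_length])).2.2
      rw [res_length, ← hR] at h1
      rwa [res_succ]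
  refine ⟨mkBr [] g, fun n => ?_, fun n => ?_⟩
  · rw [hR n]
    exact (hg _ (by rw [res_length]; exact hinv n)).1
  · have := (hg _ (by rw [res_length]; exact hinv n)).2.1
    rw [res_length, ← hR] at this
    exact this

end

end GD

open Function Set
namespace GD
attribute [local instance] Ultrafilter.add Ultrafilter.addSemigroup

theorem res_eq_of {α : Type*} {x y : ℕ → α} {n : ℕ} (h : res y n = res x n) :
    ∀ i < n, y i = x i := by
  intro i hi
  have h1 := res_get y i n hi
  rw [h, res_get x i n hi] at h1
  exact (Option.some.inj h1).symm

theorem Uopen_of {α : Type*} {𝒰 : Ultrafilter α} {G : Set (ℕ → α)}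
    (h : ∀ x ∈ G, ∃ n, ∀ y : ℕ → α, (∀ i < n, y i = x i) → y ∈ G) : Uopen 𝒰 G := by
  intro x hx m
  obtain ⟨n, hn⟩ := h x hx
  refine ⟨max m n, le_max_left _ _, fun _ => univ, fun _ => Filter.univ_mem, ?_⟩
  intro y hy
  have h1 := hy.1
  rw [res_length] at h1
  exact hn y fun i hi => res_eq_of h1 i (lt_of_lt_of_le hi (le_max_right _ _))

theorem Ram_const {α : Type*} {𝒰 : Ultrafilter α} (p : Prop) : Ram 𝒰 {_x : ℕ → α | p} := by
  intro s
  by_cases h : p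
  · exact Or.inl ⟨fun _ => univ, fun _ => Filter.univ_mem, fun _ _ => h⟩
  · exact Or.inr ⟨fun _ => univ, fun _ => Filter.univ_mem, fun _ _ => h⟩

theorem isBlockSeq_dflt (J : ℕ) : IsBlockSeq J (fun n => Pi.single n (J : ℤ)) := by
  refine ⟨fun n => ⟨(finite_singleton n).subset ?_, fun m => ?_, n, by simp⟩, ?_⟩
  · intro m hm
    by_contra hc
    exact hm (Pi.single_eq_of_ne hc _)
  · by_cases h : m = n
    · subst h; simp
    · beta_reduce
      rw [Pi.single_eq_of_ne h]; simp
  · intro m n hmn a b ha hb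
    have h1 : a = m := by
      by_contra hc
      exact ha (Pi.single_eq_of_ne hc _)
    have h2 : b = n := by
      by_contra hc
      exact hb (Pi.single_eq_of_ne hc _)
    omega

open Classical in
/-- Retraction of all sequences onto block sequences. -/
noncomputable def retr (J : ℕ) (x : ℕ → ℕ → ℤ) : BlockSeq J :=
  if h : IsBlockSeq J x then ⟨x, h⟩ else ⟨_, isBlockSeq_dflt J⟩

theorem open_nhd {J : ℕ} {O : Set (BlockSeq J)} (hO : IsOpen O) :
    ∀ P ∈ O, ∃ n : ℕ, ∀ Q : BlockSeq J, (∀ i < n, Q.1 i = P.1 i) → Q ∈ O := by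
  have hO' : TopologicalSpace.GenerateOpen {O | ∃ s : List (ℕ → ℤ),
      O = {P : BlockSeq J | ∀ i : Fin s.length, P.1 i.1 = s.get i}} O := hO
  induction hO' with
  | basic O h =>
    obtain ⟨s, rfl⟩ := h
    intro P hP
    exact ⟨s.length, fun Q hQ i => (hQ i.1 i.2).trans (hP i)⟩
  | univ => exact fun P _ => ⟨0, fun _ _ => mem_univ _⟩
  | inter A B hA hB ihA ihB =>
    intro P hP
    obtain ⟨n, hn⟩ := ihA hA P hP.1
    obtain ⟨m, hm⟩ := ihB hB P hP.2
    exact ⟨max n m, fun Q hQ => ⟨hn Q fun i hi => hQ i (lt_max_of_lt_left hi),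
      hm Q fun i hi => hQ i (lt_max_of_lt_right hi)⟩⟩
  | sUnion S hS ih =>
    intro P hP
    obtain ⟨A, hA, hPA⟩ := hP
    obtain ⟨n, hn⟩ := ih A hA (hS A hA) P hPA
    exact ⟨n, fun Q hQ => ⟨A, hA, hn Q hQ⟩⟩

theorem Ram_block {𝒰 : Ultrafilter (ℕ → ℤ)} (J : ℕ) : Ram 𝒰 {x | IsBlockSeq J x} := by
  rw [← compl_compl {x | IsBlockSeq J x}]
  apply Ram.compl
  apply Uopen.ram
  apply Uopen_of
  intro x hx
  have hx' : ¬ IsBlockSeq J x := hx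
  by_cases h1 : ∀ n, IsFin J (x n)
  · have h2 : ¬ ∀ m n : ℕ, m < n → BlockLt (x m) (x n) := fun h => hx' ⟨h1, h⟩
    push Not at h2
    obtain ⟨m, n, hmn, h⟩ := h2
    refine ⟨n + 1, fun y hy hb => h ?_⟩
    rw [← hy m (by omega), ← hy n (by omega)]
    exact (show IsBlockSeq J y from hb).2 m n hmn
  · push Not at h1
    obtain ⟨n, h⟩ := h1
    refine ⟨n + 1, fun y hy hb => h ?_⟩
    rw [← hy n (by omega)]
    exact (show IsBlockSeq J y from hb).1 n

theorem Ram_open {𝒰 : Ultrafilter (ℕ → ℤ)} {J : ℕ} {O : Set (BlockSeq J)} (hO : IsOpen O) :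
    Ram 𝒰 (retr J ⁻¹' O) := by
  set G : Set (ℕ → ℕ → ℤ) :=
    {x | ∃ n, ∀ Q : BlockSeq J, (∀ i < n, Q.1 i = x i) → Q ∈ O} with hG
  have hGr : Ram 𝒰 G := by
    apply Uopen.ram
    apply Uopen_of
    rintro x ⟨n, hn⟩
    exact ⟨n, fun y hy => ⟨n, fun Q hQ => hn Q fun i hi => (hQ i hi).trans (hy i hi)⟩⟩
  have e : retr J ⁻¹' O = ({x | IsBlockSeq J x} ∩ G) ∪
      ({x | IsBlockSeq J x}ᶜ ∩ {_x | (⟨_, isBlockSeq_dflt J⟩ : BlockSeq J) ∈ O}) := by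
    ext x
    by_cases hx : IsBlockSeq J x
    · have e1 : retr J x = ⟨x, hx⟩ := dif_pos hx
      constructor
      · intro h
        left
        refine ⟨hx, ?_⟩
        rw [mem_preimage, e1] at h
        exact open_nhd hO _ h
      · rintro (⟨_, n, hn⟩ | ⟨h, _⟩)
        · rw [mem_preimage, e1]
          exact hn _ fun i _ => rfl
        · exact absurd hx h
    · have e1 : retr J x = ⟨_, isBlockSeq_dflt J⟩ := dif_neg hx
      constructor
      · intro h
        rw [mem_preimage, e1] at h
        exact Or.inr ⟨hx, h⟩
      · rintro (⟨h, _⟩ | ⟨_, h⟩)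
        · exact absurd h hx
        · rw [mem_preimage, e1]
          exact h
  rw [e]
  exact ((Ram_block J).inter hGr).union ((Ram_block J).compl.inter (Ram_const _))

theorem Ram_souslin {k : ℕ} (w : Fin k → Ultrafilter (ℕ → ℤ))
    {A : Set ((j : Fin k) × BlockSeq (j.1 + 1))} (hA : SouslinMeasurable A) (j : Fin k) :
    Ram (w j) ((fun x => (⟨j, retr (j.1 + 1) x⟩ : (j : Fin k) × BlockSeq (j.1 + 1))) ⁻¹' A) := by
  refine hA {A | Ram (w j)
    ((fun x => (⟨j, retr (j.1 + 1) x⟩ : (j : Fin k) × BlockSeq (j.1 + 1))) ⁻¹' A)} ?_ ?_ ?_ ?_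
  · intro O hO
    have h := isOpen_sigma_iff.1 hO j
    exact Ram_open (J := j.1 + 1) h
  · intro B hB
    exact Ram.compl hB
  · intro B hB C hC
    exact Ram.union hB hC
  · intro F hF
    have h := Ram.souslin hF
    show Ram (w j) (_ ⁻¹' _)
    simp only [SouslinOp, preimage_iUnion, preimage_iInter] at h ⊢
    exact h

theorem exists_colour {k r : ℕ} (c : ((j : Fin k) × BlockSeq (j.1 + 1)) → Fin r)
    (hc : ∀ i : Fin r, SouslinMeasurable (c ⁻¹' {i})) (w : Fin k → Ultrafilter (ℕ → ℤ))
    (j : Fin k) : ∃ (i : Fin r) (B : List (ℕ → ℤ) → Set (ℕ → ℤ)), (∀ t, B t ∈ w j) ∧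
      ∀ x, (∀ n, x n ∈ B (res x n)) → c ⟨j, retr (j.1 + 1) x⟩ = i := by
  by_contra hcon
  push Not at hcon
  have h1 : ∀ i : Fin r, ∃ B : List (ℕ → ℤ) → Set (ℕ → ℤ), (∀ t, B t ∈ w j) ∧
      ∀ x, (∀ n, x n ∈ B (res x n)) → c ⟨j, retr (j.1 + 1) x⟩ ≠ i := by
    intro i
    rcases Ram_souslin w (hc i) j [] with ⟨B, h1, h2⟩ | ⟨B, h1, h2⟩
    · obtain ⟨x, hx, hx'⟩ := hcon i B h1
      exact absurd (h2 ⟨rfl, fun n _ => hx n⟩) hx'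
    · exact ⟨B, h1, fun x hx => h2 ⟨rfl, fun n _ => hx n⟩⟩
  choose B hB1 hB2 using h1
  obtain ⟨x, _, hx⟩ := br_nonempty (w j) [] (fun t => ⋂ i, B i t)
    (fun t => Filter.iInter_mem.2 fun i => hB1 i t)
  exact hB2 _ x (fun n => mem_iInter.1 (hx n (Nat.zero_le _)) _) rfl

theorem cof_Phi {a : ℕ} {u : Ultrafilter (ℕ → ℤ)} (hu : IsCofiniteUF (2 * a) u) :
    IsCofiniteUF a (u.map Phi) := by
  constructor
  · rw [Ultrafilter.mem_map]
    filter_upwards [hu.1] with p hp using isFin_Phi hp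
  · intro m
    rw [Ultrafilter.mem_map]
    filter_upwards [hu.2 m] with p hp n hn
    rw [Phi_apply, hp n hn, ph_zero]

theorem mainThm (k r : ℕ)
    (c : ((j : Fin k) × BlockSeq (j.1 + 1)) → Fin r)
    (hc : ∀ i : Fin r, SouslinMeasurable (c ⁻¹' {i})) :
    ∃ (i : Fin k → Fin r) (P : BlockSeq k),
      ∀ j : Fin k, ∀ Q : BlockSeq (j.1 + 1),
        (∀ n, InSpanPM (j.1 + 1) (fun m => tetris^[k - (j.1 + 1)] (P.1 m)) (Q.1 n)) →
        ∃ R : BlockSeq (j.1 + 1), c ⟨j, R⟩ = i j ∧ ∀ n, normLe (Q.1 n - R.1 n) 1 := by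
  obtain ⟨u, hS, hm, ha⟩ := exists_gowers (2 * k)
  have hw : ∀ j : Fin k, IsCofiniteUF (j.1 + 1) ((u (2 * (j.1 + 1))).map Phi) :=
    fun j => cof_Phi (hS _ (by omega)).1
  choose i B hB1 hB2 using exists_colour c hc (fun j : Fin k => (u (2 * (j.1 + 1))).map Phi)
  obtain ⟨P, hP, hP'⟩ := core (B := fun j t => B j t ∩
      {p | IsFin (j.1 + 1) p ∧ ∀ q ∈ t, (support q).Finite → BlockLt q p}) hS hm ha
    (fun j t => Filter.inter_mem (hB1 j t) (fit_mem (hw j) t))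
  refine ⟨i, ⟨fun n => Phi (P n), fun n => isFin_Phi (hP.1 n), ?_⟩, ?_⟩
  · intro m n hmn a b h1 h2
    refine hP.2 m n hmn a b (fun h => h1 ?_) (fun h => h2 ?_)
    · beta_reduce
      rw [Phi_apply, h, ph_zero]
    · beta_reduce
      rw [Phi_apply, h, ph_zero]
  · intro j Q hQ
    obtain ⟨R, hR1, hR2⟩ := hP' j Q.1 Q.2 hQ
    have hRb : IsBlockSeq (j.1 + 1) R := ⟨fun n => (hR1 n).2.1,
      fun m n hmn => (hR1 n).2.2 _ (mem_res _ _ _ hmn) (hR1 m).2.1.1⟩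
    have e : retr (j.1 + 1) R = ⟨R, hRb⟩ := dif_pos hRb
    refine ⟨⟨R, hRb⟩, ?_, hR2⟩
    rw [← e]
    exact hB2 j R fun n => (hR1 n).1

end GD

/-- diagonalized version: for every Souslin measurable colouring `c` of the
disjoint union `⋃_{j=1}^k FIN_{±j}^[∞]` there are `i₁, …, i_k < r` and
`P ∈ FIN_{±k}^[∞]` such that `⟨T^{(k−j)}(P)⟩_{±j}^[∞] ⊆ (c⁻¹{i_j})₁` for each
`j = 1, …, k`. -/
theorem gowers_diagonalized (k r : ℕ) (hk : 1 ≤ k) (hr : 1 ≤ r)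
    (c : ((j : Fin k) × BlockSeq (j.1 + 1)) → Fin r)
    (hc : ∀ i : Fin r, SouslinMeasurable (c ⁻¹' {i})) :
    ∃ (i : Fin k → Fin r) (P : BlockSeq k),
      ∀ j : Fin k, ∀ Q : BlockSeq (j.1 + 1),
        (∀ n, InSpanPM (j.1 + 1) (fun m => tetris^[k - (j.1 + 1)] (P.1 m)) (Q.1 n)) →
        ∃ R : BlockSeq (j.1 + 1), c ⟨j, R⟩ = i j ∧ ∀ n, normLe (Q.1 n - R.1 n) 1 := by
  exact GD.mainThm k r c hc
end
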